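/- arXiv:1710.07261 — 4 statements merged into one kernel-verified Lean document; each statement's English description precedes it below -/
import Mathlib

section
/- Let k, l ≥ 2 be multiplicatively independent integers, let a be a k-automatic sequence and let b be an l-automatic sequence (with values in a finite alphabet Ω). If a and b coincide almost everywhere, then there exists a periodic sequence c such that a coincides with c almost everywhere and b coincides with c almost everywhere. -/
open Filter

/-- The upper density of a set of natural numbers:
`limsup_{n → ∞} |A ∩ [0,n)| / n`. -/
noncomputable def upperDensity (A : Set ℕ) : ℝ :=
  limsup (fun n : ℕ => (Nat.card ↥(A ∩ Set.Iio n) : ℝ) / n) atTop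

/-- The base-`k` representation of `n` as a word over `Σ_k = Fin k`, read starting
from the leading digit, with no leading zeros (junk value `[]` if `k ≤ 1`;
the representation of `0` is the empty word). -/
def kRepr (k n : ℕ) : List (Fin k) :=
  if h : 1 < k then
    (Nat.digits k n).reverse.pmap (fun d hd => (⟨d, hd⟩ : Fin k))
      (fun d hd => Nat.digits_lt_base h (List.mem_reverse.mp hd))
  else []

/-- Run a deterministic automaton with transition function `δ` from the state `s`
on the word `w`, reading `w` from the left: the extended transition function `δ*`. -/
def run {S : Type*} {k : ℕ} (δ : S → Fin k → S) (s : S) (w : List (Fin k)) : S :=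
  w.foldl δ s

/-- A sequence `a : ℕ → Ω` is `k`-automatic if it is produced by a deterministic
finite automaton with output, reading the base-`k` representation of the input
starting from the leading digit. -/
def IsAutomatic {Ω : Type*} (k : ℕ) (a : ℕ → Ω) : Prop :=
  ∃ (S : Type) (_ : Fintype S) (δ : S → Fin k → S) (s₀ : S) (τ : S → Ω),
    ∀ n : ℕ, a n = τ (run δ s₀ (kRepr k n))

/-- Two integers are multiplicatively independent if no nontrivial powers of them
coincide (equivalently, they are not both powers of a common integer). -/
def MultIndep (k l : ℕ) : Prop :=
  ∀ i j : ℕ, k ^ i = l ^ j → i = 0 ∧ j = 0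

/-- The finite word `w` occurs in the sequence `a` at position `i`. -/
def OccursAt {Ω : Type*} (a : ℕ → Ω) (w : List Ω) (i : ℕ) : Prop :=
  ∀ (j : ℕ) (h : j < w.length), w.get ⟨j, h⟩ = a (i + j)

/-- The finite word `w` is a factor of the sequence `a`. -/
def IsFactor {Ω : Type*} (a : ℕ → Ω) (w : List Ω) : Prop :=
  ∃ i : ℕ, OccursAt a w i

/-- A sequence is uniformly recurrent if each of its factors occurs in it with
bounded gaps. -/
def UniformlyRecurrent {Ω : Type*} (a : ℕ → Ω) : Prop :=
  ∀ w : List Ω, IsFactor a w →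
    ∃ C : ℕ, ∀ N : ℕ, ∃ i : ℕ, N ≤ i ∧ i ≤ N + C ∧ OccursAt a w i

/-- A strongly connected component of an automaton: a nonempty set of states closed
under all transitions and such that each of its states can be reached from each
other one by some word. -/
def IsSCC {S : Type*} {k : ℕ} (δ : S → Fin k → S) (C : Set S) : Prop :=
  C.Nonempty ∧ (∀ s ∈ C, ∀ u : Fin k, δ s u ∈ C) ∧
    ∀ s ∈ C, ∀ s' ∈ C, ∃ w : List (Fin k), run δ s w = s'

/-!
Let `a` be computed by reading base-`k` digits and `b` by reading base-`l` digits. After replacing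
`k` by a power `K`, reachability in the automaton of `a` is transitive, and all integers outside a
set of density zero lead to recurrent states; it suffices to study `a` on the blocks
`[x * K ^ t, (x + 1) * K ^ t)` for such `x`.

By independence, some powers satisfy `2 < K ^ m / l ^ n < 2 + ε`. A long window on which `a` and `b`
agree contains many blocks of length `K ^ m`, and the first multiples of `l ^ n` inside them lie at
pairwise different offsets. By pigeonhole two of these offsets are close and the corresponding
states of both automata are equal. Comparing `a` with `b` in the two places shows that `a` has a
small local period on an interval of length `l ^ n`. Recurrence spreads this period to all long
blocks below `x`: the pairs of states at neighbouring positions there already occur inside the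
interval.

On the blocks below `x` the sequence `a` therefore agrees with a periodic sequence `c_x`, and
likewise `b` with `c_y` on the base-`l` blocks below a typical `y`. By independence, blocks of both
kinds overlap in arbitrarily long intervals, which contain agreements of `a` and `b` in every
residue class. Hence `c_x = c_y` for all typical `x` and `y`.
-/

section Negligible

/-- A set of natural numbers whose counting function is `o(n)`. The additive constant `C` avoids
quantifying over sufficiently large `n`. -/
def Negligible (A : Set ℕ) : Prop :=
  ∀ ε : ℝ, 0 < ε → ∃ C : ℝ, ∀ n : ℕ, ((A ∩ Set.Iio n).ncard : ℝ) ≤ ε * n + C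

variable {A B : Set ℕ}

lemma finite_inter_Iio (A : Set ℕ) (n : ℕ) : (A ∩ Set.Iio n).Finite :=
  (Set.finite_Iio n).inter_of_right A

lemma ncard_inter_Iio_le (A : Set ℕ) (n : ℕ) : (A ∩ Set.Iio n).ncard ≤ n :=
  (Set.ncard_le_ncard Set.inter_subset_right (Set.finite_Iio n)).trans_eq (by simp)

lemma Negligible.mono (hB : Negligible B) (h : A ⊆ B) : Negligible A := fun ε hε =>
  (hB ε hε).imp fun _ hC n => le_trans (mod_cast Set.ncard_le_ncard
    (Set.inter_subset_inter_left _ h) (finite_inter_Iio B n)) (hC n)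

lemma Negligible.union (hA : Negligible A) (hB : Negligible B) : Negligible (A ∪ B) := by
  intro ε hε
  obtain ⟨C, hC⟩ := hA (ε / 2) (by positivity)
  obtain ⟨C', hC'⟩ := hB (ε / 2) (by positivity)
  refine ⟨C + C', fun n => ?_⟩
  have hunion : (((A ∪ B) ∩ Set.Iio n).ncard : ℝ)
      ≤ (A ∩ Set.Iio n).ncard + (B ∩ Set.Iio n).ncard := by
    rw [Set.union_inter_distrib_right]
    exact_mod_cast Set.ncard_union_le _ _
  linarith [hC n, hC' n]

lemma negligible_of_upperDensity_eq_zero (h : upperDensity A = 0) : Negligible A := by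
  intro ε hε
  have hbdd : IsBoundedUnder (· ≤ ·) atTop
      (fun n : ℕ => (Nat.card ↥(A ∩ Set.Iio n) : ℝ) / n) :=
    isBoundedUnder_of ⟨1, fun n => div_le_one_of_le₀
      (mod_cast ncard_inter_Iio_le A n) (Nat.cast_nonneg n)⟩
  obtain ⟨N, hN⟩ := eventually_atTop.1 (eventually_lt_of_limsup_lt (h.trans_lt hε) hbdd)
  refine ⟨N, fun n => ?_⟩
  have hcard : ((A ∩ Set.Iio n).ncard : ℝ) ≤ n := mod_cast ncard_inter_Iio_le A n
  rcases lt_or_ge n N with hn | hn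
  · have hnN : (n : ℝ) ≤ N := mod_cast hn.le
    linarith [mul_nonneg hε.le n.cast_nonneg]
  rcases n.eq_zero_or_pos with rfl | hpos
  · simp
  have hlt : ((A ∩ Set.Iio n).ncard : ℝ) < ε * n :=
    (div_lt_iff₀ (mod_cast hpos)).1 (hN n hn)
  linarith [(N.cast_nonneg : (0 : ℝ) ≤ N)]

lemma Negligible.upperDensity_eq_zero (h : Negligible A) : upperDensity A = 0 := by
  refine Tendsto.limsup_eq (Metric.tendsto_atTop.2 fun ε hε => ?_)
  obtain ⟨C, hC⟩ := h (ε / 2) (by positivity)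
  obtain ⟨N, hN⟩ := exists_nat_gt (2 * C / ε)
  refine ⟨N + 1, fun n hn => ?_⟩
  have hpos : (0 : ℝ) < n := mod_cast (by lia : 0 < n)
  have hNn : (N : ℝ) ≤ n := mod_cast (by lia : N ≤ n)
  have hCn : 2 * C < n * ε := (div_lt_iff₀ hε).1 (hN.trans_le hNn)
  rw [Real.dist_eq, sub_zero, abs_of_nonneg (by positivity), Nat.card_coe_set_eq,
    div_lt_iff₀ hpos]
  linarith [hC n]

lemma upperDensity_eq_zero_iff_negligible : upperDensity A = 0 ↔ Negligible A :=
  ⟨negligible_of_upperDensity_eq_zero, Negligible.upperDensity_eq_zero⟩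

lemma Negligible.exists_notMem (hA : Negligible A) : ∃ n, n ∉ A := by
  by_contra! h
  obtain ⟨C, hC⟩ := hA (1 / 2) (by norm_num)
  obtain ⟨n, hn⟩ := exists_nat_gt (2 * C)
  have hfull : A ∩ Set.Iio n = Set.Iio n := Set.inter_eq_right.2 fun m _ => h m
  have hCn := hC n
  simp only [hfull, Set.ncard_Iio_nat] at hCn
  linarith

lemma ncard_inter_Iio_le_mul_of_div {M c : ℕ} (hM : 1 ≤ M) (hAB : ∀ m ∈ A, m / M ∈ B)
    (hc : ∀ b, {m ∈ A | m / M = b}.ncard ≤ c) (n : ℕ) :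
    (A ∩ Set.Iio n).ncard ≤ c * (B ∩ Set.Iio (n / M + 1)).ncard := by
  classical
  have hfin (b : ℕ) : {m ∈ A | m / M = b}.Finite :=
    (Set.finite_Iio ((b + 1) * M)).subset fun m hm =>
      (Nat.div_lt_iff_lt_mul hM).1 (hm.2.trans_lt b.lt_succ_self)
  rw [Set.ncard_eq_toFinset_card _ (finite_inter_Iio A n),
    Set.ncard_eq_toFinset_card _ (finite_inter_Iio B _)]
  refine Finset.card_le_mul_card_image_of_maps_to (f := (· / M)) (fun m hm => ?_) c fun b _ => ?_
  · simp only [Set.Finite.mem_toFinset, Set.mem_inter_iff, Set.mem_Iio] at hm ⊢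
    exact ⟨hAB m hm.1, Nat.lt_succ_of_le (Nat.div_le_div_right hm.2.le)⟩
  · rw [← Set.ncard_coe_finset]
    refine (Set.ncard_le_ncard (fun m hm => ?_) (hfin b)).trans (hc b)
    simp only [Finset.coe_filter, Set.Finite.mem_toFinset, Set.mem_ofPred_eq] at hm
    exact ⟨hm.1.1, hm.2⟩

lemma ncard_fiber_div_le {M : ℕ} (hM : 1 ≤ M) (A : Set ℕ) (b : ℕ) :
    {m ∈ A | m / M = b}.ncard ≤ M := by
  have hsub : {m ∈ A | m / M = b} ⊆ Set.Ico (b * M) (b * M + M) := fun m hm => by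
    rw [Set.mem_Ico, ← hm.2]
    exact ⟨Nat.div_mul_le_self m M, Nat.lt_div_mul_add hM⟩
  exact (Set.ncard_le_ncard hsub (Set.finite_Ico _ _)).trans_eq (by simp)

lemma Negligible.preimage_div (hA : Negligible A) {M : ℕ} (hM : 1 ≤ M) :
    Negligible {n | n / M ∈ A} := by
  intro ε hε
  obtain ⟨C, hC⟩ := hA ε hε
  refine ⟨M * (ε + C), fun n => ?_⟩
  have hcount : (({n | n / M ∈ A} ∩ Set.Iio n).ncard : ℝ)
      ≤ M * (A ∩ Set.Iio (n / M + 1)).ncard :=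
    mod_cast ncard_inter_Iio_le_mul_of_div hM (fun _ hm => hm) (ncard_fiber_div_le hM _) n
  have hdiv : (M : ℝ) * (n / M : ℕ) ≤ n := mod_cast Nat.mul_div_le n M
  calc (({n | n / M ∈ A} ∩ Set.Iio n).ncard : ℝ)
      ≤ M * (ε * (n / M + 1 : ℕ) + C) := hcount.trans (by gcongr; exact hC _)
    _ = ε * (M * (n / M : ℕ)) + M * (ε + C) := by push_cast; ring
    _ ≤ ε * n + M * (ε + C) := by gcongr

lemma ncard_inter_Iio_le_of_branching {K : ℕ} (hK : 1 ≤ K)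
    (hparent : ∀ x, ∀ d < K, 1 ≤ x → x * K + d ∈ B → x ∈ B)
    (hchild : ∀ x, 1 ≤ x → ∃ d < K, x * K + d ∉ B) (n : ℕ) :
    (B ∩ Set.Iio n).ncard ≤ (K - 1) * (B ∩ Set.Iio (n / K + 1)).ncard + K := by
  have hdiv {m : ℕ} (hm : m ∈ B ∩ Set.Ici K) : m / K ∈ B :=
    hparent _ _ (m.mod_lt hK) (Nat.div_pos hm.2 hK) (by rw [Nat.div_add_mod']; exact hm.1)
  have hfiber (b : ℕ) : {m ∈ B ∩ Set.Ici K | m / K = b}.ncard ≤ K - 1 := by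
    rcases b.eq_zero_or_pos with rfl | hb
    · rw [Set.sep_eq_empty_iff_mem_false.2 fun m hm => (Nat.div_pos hm.2 hK).ne', Set.ncard_empty]
      exact Nat.zero_le _
    obtain ⟨d, hd, hdB⟩ := hchild b hb
    have hsub : {m ∈ B ∩ Set.Ici K | m / K = b} ⊆ Set.Ico (b * K) (b * K + K) \ {b * K + d} := by
      rintro m ⟨⟨hmB, -⟩, rfl⟩
      exact ⟨⟨m.div_mul_le_self K, Nat.lt_div_mul_add hK⟩, fun hm => hdB (hm ▸ hmB)⟩
    refine (Set.ncard_le_ncard hsub ((Set.finite_Ico _ _).sdiff)).trans_eq ?_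
    rw [Set.ncard_sdiff_singleton_of_mem (by simpa using hd), Set.ncard_Ico_nat]
    lia
  calc (B ∩ Set.Iio n).ncard
      ≤ ((B ∩ Set.Ici K ∩ Set.Iio n) ∪ Set.Iio K).ncard :=
        Set.ncard_le_ncard (fun m hm => by by_cases h : m < K <;> simp_all)
          ((finite_inter_Iio _ n).union (Set.finite_Iio K))
    _ ≤ (B ∩ Set.Ici K ∩ Set.Iio n).ncard + (Set.Iio K).ncard := Set.ncard_union_le _ _
    _ ≤ _ := by
        rw [Set.ncard_Iio_nat]
        exact Nat.add_le_add_right (ncard_inter_Iio_le_mul_of_div hK (fun m => hdiv) hfiber n) K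

lemma negligible_of_branching {K : ℕ} (hK : 1 ≤ K)
    (hparent : ∀ x, ∀ d < K, 1 ≤ x → x * K + d ∈ B → x ∈ B)
    (hchild : ∀ x, 1 ≤ x → ∃ d < K, x * K + d ∉ B) : Negligible B := by
  have hcount := ncard_inter_Iio_le_of_branching hK hparent hchild
  have hK0 : (0 : ℝ) < K := mod_cast hK
  have hiter (i : ℕ) : ∃ C : ℝ, ∀ n : ℕ,
      ((B ∩ Set.Iio n).ncard : ℝ) ≤ ((K - 1 : ℕ) / K : ℝ) ^ i * n + C := by
    induction i with
    | zero => exact ⟨0, fun n => by simpa using ncard_inter_Iio_le B n⟩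
    | succ i ih =>
      obtain ⟨C, hC⟩ := ih
      set ρ : ℝ := (K - 1 : ℕ) / K with hρ
      refine ⟨(K - 1 : ℕ) * (ρ ^ i + C) + K, fun n => ?_⟩
      have hdiv : ((n / K : ℕ) : ℝ) ≤ n / K := Nat.cast_div_le
      calc ((B ∩ Set.Iio n).ncard : ℝ)
          ≤ (K - 1 : ℕ) * ((B ∩ Set.Iio (n / K + 1)).ncard : ℝ) + K := mod_cast hcount n
        _ ≤ (K - 1 : ℕ) * (ρ ^ i * (n / K + 1) + C) + K := by
            gcongr
            refine (hC _).trans ?_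
            push_cast
            gcongr
        _ = ρ ^ (i + 1) * n + ((K - 1 : ℕ) * (ρ ^ i + C) + K) := by
            rw [pow_succ, hρ]
            field_simp
            ring
  intro ε hε
  have hρ : ((K - 1 : ℕ) / K : ℝ) < 1 := (div_lt_one hK0).2 (mod_cast Nat.sub_one_lt_of_lt hK)
  obtain ⟨i, hi⟩ := exists_pow_lt_of_lt_one hε hρ
  exact (hiter i).imp fun C hC n => (hC n).trans (by gcongr)

lemma le_ncard_inter_Iio_of_forall_block {L u n : ℕ} (hL : 1 ≤ L)
    (h : ∀ i < n, ∃ m ∈ A, u + i * L ≤ m ∧ m < u + i * L + L) :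
    n ≤ (A ∩ Set.Iio (u + n * L)).ncard := by
  have hsub : Set.Iio n ⊆ (fun m => (m - u) / L) '' (A ∩ Set.Iio (u + n * L)) := by
    intro i hi
    obtain ⟨m, hmA, hle, hlt⟩ := h i hi
    have hmul : i * L + L ≤ n * L := by rw [← Nat.succ_mul]; exact Nat.mul_le_mul_right L hi
    refine ⟨m, ⟨hmA, by rw [Set.mem_Iio]; lia⟩, Nat.div_eq_of_lt_le (by lia) ?_⟩
    rw [Nat.succ_mul]
    lia
  calc n = (Set.Iio n).ncard := (Set.ncard_Iio_nat n).symm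
    _ ≤ _ := Set.ncard_le_ncard hsub ((finite_inter_Iio A _).image _)
    _ ≤ _ := Set.ncard_image_le (finite_inter_Iio A _)

lemma Negligible.exists_free_window (hA : Negligible A) {L : ℕ} (hL : 1 ≤ L) (D : ℕ) :
    ∃ N, ∀ H u, N ≤ H → u ≤ D * H → ∃ z, u ≤ z ∧ z + L ≤ u + H ∧ ∀ s < L, z + s ∉ A := by
  have hL0 : (0 : ℝ) < L := mod_cast hL
  obtain ⟨C, hC⟩ := hA (1 / (2 * L * (D + 1))) (by positivity)
  obtain ⟨N, hN⟩ := exists_nat_gt (2 * L * (C + 1))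
  refine ⟨N, fun H u hH hu => ?_⟩
  by_contra! hcon
  have hdiv : H / L * L ≤ H := Nat.div_mul_le_self H L
  have hblocks : H / L ≤ (A ∩ Set.Iio (u + H / L * L)).ncard := by
    refine le_ncard_inter_Iio_of_forall_block hL fun i hi => ?_
    have hmul : i * L + L ≤ H / L * L := by rw [← Nat.succ_mul]; exact Nat.mul_le_mul_right L hi
    obtain ⟨s, hs, hsA⟩ := hcon (u + i * L) (by lia) (by lia)
    exact ⟨_, hsA, by lia, by lia⟩
  have hu' : ((u + H / L * L : ℕ) : ℝ) ≤ (D + 1) * H :=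
    mod_cast (by rw [add_one_mul]; lia : u + H / L * L ≤ (D + 1) * H)
  have hlow : (H : ℝ) / L < (H / L : ℕ) + 1 := by
    rw [div_lt_iff₀ hL0]
    exact_mod_cast (by rw [add_one_mul]; exact Nat.lt_div_mul_add hL : H < (H / L + 1) * L)
  have hupper : ((H / L : ℕ) : ℝ) ≤ H / (2 * L) + C := calc
    ((H / L : ℕ) : ℝ) ≤ (A ∩ Set.Iio (u + H / L * L)).ncard := mod_cast hblocks
    _ ≤ 1 / (2 * L * (D + 1)) * (u + H / L * L : ℕ) + C := hC _
    _ ≤ 1 / (2 * L * (D + 1)) * ((D + 1) * H) + C := by gcongr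
    _ = H / (2 * L) + C := by field_simp
  have hhalf : (H : ℝ) / L = 2 * (H / (2 * L)) := by field_simp
  have hNH : (N : ℝ) ≤ H := mod_cast hH
  have hbig : C + 1 < H / (2 * L) := by
    rw [lt_div_iff₀ (by positivity)]
    linarith
  linarith

end Negligible

namespace MultIndep

variable {k l K L : ℕ}

lemma symm (h : MultIndep k l) : MultIndep l k := fun i j hij => (h j i hij.symm).symm

lemma pow (h : MultIndep k l) {e f : ℕ} (he : 1 ≤ e) (hf : 1 ≤ f) :
    MultIndep (k ^ e) (l ^ f) := by
  intro i j hij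
  rw [← pow_mul, ← pow_mul] at hij
  obtain ⟨hei, hfj⟩ := h _ _ hij
  exact ⟨(mul_eq_zero.1 hei).resolve_left (by lia), (mul_eq_zero.1 hfj).resolve_left (by lia)⟩

lemma irrational_log_div_log (hK : 2 ≤ K) (hL : 2 ≤ L) (h : MultIndep K L) :
    Irrational (Real.log K / Real.log L) := by
  have hlogK : 0 < Real.log K := Real.log_pos (mod_cast hK)
  have hlogL : 0 < Real.log L := Real.log_pos (mod_cast hL)
  rintro ⟨q, hq⟩
  have hnum : 0 < q.num := Rat.num_pos.2 (by exact_mod_cast hq ▸ div_pos hlogK hlogL)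
  lift q.num to ℕ using hnum.le with n hn
  have hlog : q.den * Real.log K = n * Real.log L := by
    have hden : (q.den : ℝ) ≠ 0 := mod_cast q.den_ne_zero
    rw [Rat.cast_def, ← hn, Int.cast_natCast, div_eq_div_iff hden hlogL.ne'] at hq
    rw [hq, mul_comm]
  have hpow : K ^ q.den = L ^ n := by
    have hK0 : (0 : ℝ) < K := by positivity
    have hL0 : (0 : ℝ) < L := by positivity
    have := Real.log_injOn_pos (Set.mem_Ioi.2 (pow_pos hK0 q.den)) (Set.mem_Ioi.2 (pow_pos hL0 n))
      (by simpa only [Real.log_pow] using hlog)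
    exact_mod_cast this
  exact q.den_ne_zero (h _ _ hpow).1

lemma exists_pow_div_pow_mem_Ioo (hK : 2 ≤ K) (hL : 2 ≤ L) (h : MultIndep K L) {A B : ℝ}
    (hA : 0 < A) (hAB : A < B) (N : ℕ) :
    ∃ t u : ℕ, N ≤ t ∧ N ≤ u ∧ (K ^ t / L ^ u : ℝ) ∈ Set.Ioo A B := by
  have hlogK : 0 < Real.log K := Real.log_pos (mod_cast hK)
  have hlogL : 0 < Real.log L := Real.log_pos (mod_cast hL)
  have : Fact (0 < Real.log L) := ⟨hlogL⟩
  let π : ℝ → AddCircle (Real.log L) := (↑)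
  have hdense : DenseRange fun n : ℤ => n • π (Real.log K) :=
    AddCircle.denseRange_zsmul_coe_iff.2 (irrational_log_div_log hK hL h)
  obtain ⟨x, hx⟩ := Set.nonempty_Ioo.2 (Real.log_lt_log hA hAB)
  have hcluster : MapClusterPt (π x) atTop fun t : ℕ => t • π (Real.log K) :=
    mapClusterPt_atTop_nsmul_iff_mem_topologicalClosure_zmultiples.2 (hdense _)
  have hnhds : π '' Set.Ioo (Real.log A) (Real.log B) ∈ nhds (π x) :=
    (QuotientAddGroup.isOpenMap_coe _ isOpen_Ioo).mem_nhds ⟨x, hx, rfl⟩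
  obtain ⟨T, hT⟩ := exists_nat_gt ((N * Real.log L + Real.log B) / Real.log K)
  obtain ⟨t, ht, y, hy, hyt⟩ := (hcluster.frequently hnhds).forall_exists_of_atTop (max N T)
  obtain ⟨z, hz⟩ : ∃ z : ℤ, z • Real.log L = t • Real.log K - y :=
    (AddCircle.coe_eq_zero_iff _).1 (by
      rw [AddCircle.coe_sub, AddCircle.coe_nsmul, sub_eq_zero]
      exact hyt.symm)
  rw [zsmul_eq_mul, nsmul_eq_mul] at hz
  have hTt : (T : ℝ) ≤ t := mod_cast (le_max_right N T).trans ht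
  have hzN : (N : ℝ) < z := by
    refine lt_of_mul_lt_mul_right ?_ hlogL.le
    linarith [(div_lt_iff₀ hlogK).1 (hT.trans_le hTt), hy.2]
  lift z to ℕ using by exact_mod_cast N.cast_nonneg.trans hzN.le with u
  rw [Int.cast_natCast] at hz hzN
  have hKt : (0 : ℝ) < K ^ t / L ^ u := by positivity
  have hlog : Real.log (K ^ t / L ^ u) = y := by
    rw [Real.log_div (by positivity) (by positivity), Real.log_pow, Real.log_pow, hz]
    ring
  refine ⟨t, u, (le_max_left N T).trans ht, mod_cast hzN.le, ?_, ?_⟩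
  · exact (Real.log_lt_log_iff hA hKt).1 (hlog ▸ hy.1)
  · exact (Real.log_lt_log_iff hKt (hA.trans hAB)).1 (hlog ▸ hy.2)

lemma exists_forall_not_dvd (hK : 2 ≤ K) (hL : 2 ≤ L) (h : MultIndep K L) (N : ℕ) :
    ∃ m n, 2 * L ^ n ≤ K ^ m ∧ ∀ c, 0 < c → c < N → ¬ L ^ n ∣ c * K ^ m := by
  obtain ⟨m, n, -, -, hlow, hhigh⟩ := h.exists_pow_div_pow_mem_Ioo hK hL (A := 2)
    (B := 2 + 1 / (N + 1)) two_pos (lt_add_of_pos_right _ (by positivity)) 0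
  have hLn : (0 : ℝ) < L ^ n := by positivity
  rw [lt_div_iff₀ hLn] at hlow
  rw [div_lt_iff₀ hLn] at hhigh
  refine ⟨m, n, mod_cast hlow.le, fun c hc hcN ⟨e, he⟩ => ?_⟩
  have he' : (c * K ^ m : ℝ) = L ^ n * e := mod_cast he
  have hc0 : (0 : ℝ) < c := mod_cast hc
  have hcN' : (c : ℝ) * (1 / (N + 1)) < 1 := by
    rw [mul_one_div, div_lt_one (by positivity)]
    exact_mod_cast hcN.trans N.lt_succ_self
  have hgt : (2 * c : ℝ) < e := by
    refine lt_of_mul_lt_mul_left ?_ hLn.le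
    nlinarith [mul_lt_mul_of_pos_left hlow hc0]
  have hlt : (e : ℝ) < 2 * c + 1 := by
    refine lt_of_mul_lt_mul_left ?_ hLn.le
    nlinarith [mul_lt_mul_of_pos_left hhigh hc0, mul_lt_mul_of_pos_left hcN' hLn]
  have hgt' : 2 * c < e := mod_cast hgt
  have hlt' : e < 2 * c + 1 := mod_cast hlt
  lia

end MultIndep

section Labelling

variable {S Ω : Type*} {k K : ℕ}

/-- The state reached from `s` after reading the `t` lowest base-`K` digits of `j`, leading zeros
included, starting from the most significant one. -/
def runDigits [NeZero K] (δ : S → Fin K → S) : ℕ → S → ℕ → S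
  | 0, s, _ => s
  | t + 1, s, j => δ (runDigits δ t s (j / K)) (Fin.ofNat K j)

/-- The labels of the positive integers are obtained by letting the automaton `δ` read base-`K`
digits: appending the digit `d` to `x` changes the label of `x` by `δ · d`. The label of `0` is
not constrained since appending the digit `0` to it does not change the integer. -/
def IsLabelling (δ : S → Fin K → S) (α : ℕ → S) : Prop :=
  ∀ x, 1 ≤ x → ∀ d : Fin K, α (x * K + d) = δ (α x) d

lemma kRepr_mul_add (hk : 1 < k) {x : ℕ} (hx : 1 ≤ x) (d : Fin k) :
    kRepr k (x * k + d) = kRepr k x ++ [d] := by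
  have hdigits : Nat.digits k (x * k + d) = (d : ℕ) :: Nat.digits k x := by
    rw [add_comm, mul_comm]
    exact Nat.digits_add k hk d x d.isLt (Or.inr (Nat.ne_of_gt hx))
  simp [kRepr, hk, hdigits, List.pmap_append]

lemma IsAutomatic.exists_isLabelling (hk : 1 < k) {a : ℕ → Ω} (ha : IsAutomatic k a) :
    ∃ (S : Type) (_ : Finite S) (δ : S → Fin k → S) (α : ℕ → S) (τ : S → Ω),
      IsLabelling δ α ∧ ∀ n, a n = τ (α n) := by
  obtain ⟨S, hS, δ, s₀, τ, h⟩ := ha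
  refine ⟨S, inferInstance, δ, fun n => run δ s₀ (kRepr k n), τ, fun x hx d => ?_, h⟩
  simp only [kRepr_mul_add hk hx d, run, List.foldl_append, List.foldl_cons, List.foldl_nil]

variable [NeZero K] {δ : S → Fin K → S} {α : ℕ → S}

lemma runDigits_add (δ : S → Fin K → S) (i t : ℕ) (s : S) (x : ℕ) {j : ℕ} (hj : j < K ^ t) :
    runDigits δ (i + t) s (x * K ^ t + j) = runDigits δ t (runDigits δ i s x) j := by
  induction t generalizing j with
  | zero => simp_all [runDigits]
  | succ t ih =>
    have hK : 0 < K := NeZero.pos K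
    have hdiv : (x * K ^ (t + 1) + j) / K = x * K ^ t + j / K := by
      rw [pow_succ, ← mul_assoc, add_comm, Nat.add_mul_div_right _ _ hK, add_comm]
    have hmod : Fin.ofNat K (x * K ^ (t + 1) + j) = Fin.ofNat K j := by
      simp [Fin.ext_iff, pow_succ, ← mul_assoc]
    rw [← add_assoc, runDigits, runDigits, hdiv, hmod,
      ih (Nat.div_lt_of_lt_mul (by rwa [mul_comm, ← pow_succ]))]

lemma runDigits_one (δ : S → Fin K → S) (s : S) (d : Fin K) : runDigits δ 1 s d = δ s d := by
  simp [runDigits]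

lemma IsLabelling.apply_mul_pow_add (h : IsLabelling δ α) {x : ℕ} (hx : 1 ≤ x) (t : ℕ) {j : ℕ}
    (hj : j < K ^ t) : α (x * K ^ t + j) = runDigits δ t (α x) j := by
  induction t generalizing j with
  | zero => simp_all [runDigits]
  | succ t ih =>
    have hprefix : 1 ≤ x * K ^ t + j / K :=
      (Nat.mul_pos hx (pow_pos (NeZero.pos K) t)).trans_le (Nat.le_add_right _ _)
    calc α (x * K ^ (t + 1) + j)
        = α ((x * K ^ t + j / K) * K + (Fin.ofNat K j : Fin K)) := by
          rw [Fin.val_ofNat, add_mul, add_assoc, Nat.div_add_mod', mul_assoc, ← pow_succ]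
      _ = runDigits δ (t + 1) (α x) j := by
          rw [h _ hprefix, ih (Nat.div_lt_of_lt_mul (by rwa [mul_comm, ← pow_succ])), runDigits]

/-- The transition function of the automaton reading `e` digits at a time. -/
def powStep (δ : S → Fin K → S) (e : ℕ) (s : S) (d : Fin (K ^ e)) : S :=
  runDigits δ e s d

lemma IsLabelling.pow (h : IsLabelling δ α) (e : ℕ) : IsLabelling (powStep δ e) α :=
  fun _ hx d => h.apply_mul_pow_add hx e d.isLt

end Labelling

lemma exists_isIdempotentElem_pow {M : Type*} [Monoid M] [Finite M] (m : M) :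
    ∃ e, 1 ≤ e ∧ IsIdempotentElem (m ^ e) := by
  let : TopologicalSpace M := ⊥
  have : DiscreteTopology M := ⟨rfl⟩
  obtain ⟨_, ⟨e, he, rfl⟩, hidem⟩ := exists_idempotent_in_compact_subsemigroup
    (fun _ => continuous_of_discreteTopology) ((m ^ ·) '' Set.Ici 1) (by simp)
    (Set.toFinite _).isCompact (by
      rintro _ ⟨i, hi, rfl⟩ _ ⟨j, -, rfl⟩
      exact ⟨i + j, Nat.le_add_right_of_le hi, pow_add m i j⟩)
  exact ⟨e, he, hidem⟩

lemma exists_iterate_add_self_eq {X : Type*} [Finite X] (f : X → X) :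
    ∃ e, 1 ≤ e ∧ f^[e + e] = f^[e] := by
  have : Finite (Function.End X) := inferInstanceAs (Finite (X → X))
  have hpow (n : ℕ) : (show Function.End X from f) ^ n = f^[n] :=
    hom_coe_pow (fun g : Function.End X => g) rfl (fun _ _ => rfl) f n
  obtain ⟨e, he, hidem⟩ := exists_isIdempotentElem_pow (show Function.End X from f)
  refine ⟨e, he, ?_⟩
  rw [← hpow, ← hpow, pow_add]
  exact hidem

section Recurrence

variable {S : Type*} {K : ℕ} [NeZero K] {δ : S → Fin K → S} {α : ℕ → S}

/-- One transition of the automaton `δ` leads from `s` to `s'`. -/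
def Reach (δ : S → Fin K → S) (s s' : S) : Prop :=
  ∃ d, δ s d = s'

lemma reach_powStep_zero {s s' : S} : Reach (powStep δ 0) s s' ↔ s = s' :=
  ⟨fun ⟨_, h⟩ => h, fun h => ⟨0, h⟩⟩

lemma reach_powStep_succ {e : ℕ} {s s' : S} :
    Reach (powStep δ (e + 1)) s s' ↔ ∃ u, Reach (powStep δ e) s u ∧ Reach δ u s' := by
  constructor
  · rintro ⟨⟨j, hj⟩, rfl⟩
    have hlt : j / K < K ^ e := Nat.div_lt_of_lt_mul (by rwa [mul_comm, ← pow_succ])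
    exact ⟨_, ⟨⟨j / K, hlt⟩, rfl⟩, Fin.ofNat K j, rfl⟩
  · rintro ⟨_, ⟨j, rfl⟩, d, rfl⟩
    have hlt : j * K + d < K ^ (e + 1) := calc
      j * K + d < (j + 1) * K := by rw [add_one_mul]; lia
      _ ≤ K ^ (e + 1) := by rw [pow_succ]; exact Nat.mul_le_mul_right _ j.isLt
    refine ⟨⟨j * K + d, hlt⟩, ?_⟩
    have hadd := runDigits_add δ e 1 s j (d.isLt.trans_eq (pow_one K).symm)
    rwa [pow_one, runDigits_one] at hadd

lemma exists_isTrans_reach_powStep [Finite S] (δ : S → Fin K → S) :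
    ∃ e, 1 ≤ e ∧ IsTrans S (Reach (powStep δ e)) := by
  let f : Set S → Set S := fun A => {s' | ∃ s ∈ A, Reach δ s s'}
  have hf (e : ℕ) (A : Set S) : f^[e] A = {s' | ∃ s ∈ A, Reach (powStep δ e) s s'} := by
    induction e with
    | zero => simp only [Function.iterate_zero_apply, reach_powStep_zero, exists_eq_right,
        Set.ofPred_mem_eq]
    | succ e ih =>
      ext s'
      rw [Function.iterate_succ_apply', ih]
      simp only [f, reach_powStep_succ, Set.mem_ofPred_eq]
      tauto
  obtain ⟨e, he, hidem⟩ := exists_iterate_add_self_eq f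
  refine ⟨e, he, ⟨fun s s' s'' hs' hs'' => ?_⟩⟩
  have hmem : s'' ∈ f^[e] (f^[e] {s}) := by
    rw [hf, hf]
    exact ⟨s', ⟨s, rfl, hs'⟩, hs''⟩
  rw [← Function.iterate_add_apply, hidem, hf] at hmem
  obtain ⟨_, rfl, hreach⟩ := hmem
  exact hreach

/-- A state that can be reached again from all states reachable from it. -/
def IsRecurrent (δ : S → Fin K → S) (s : S) : Prop :=
  ∀ s', Reach δ s s' → Reach δ s' s

omit [NeZero K] in
lemma IsRecurrent.of_reach [IsTrans S (Reach δ)] {s s' : S} (hs : IsRecurrent δ s)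
    (h : Reach δ s s') : IsRecurrent δ s' :=
  fun _ hu => _root_.trans (hs _ (_root_.trans h hu)) h

lemma exists_reach_isRecurrent [Finite S] [IsTrans S (Reach δ)] (s : S) :
    ∃ s', Reach δ s s' ∧ IsRecurrent δ s' := by
  obtain ⟨s', hs', hmin⟩ := (Set.toFinite {s' | Reach δ s s'}).exists_minimalFor
    (fun s' => {u | Reach δ s' u}) _ ⟨δ s 0, 0, rfl⟩
  have hs'' : Reach δ s' (δ s' 0) := ⟨0, rfl⟩
  refine ⟨δ s' 0, _root_.trans hs' hs'', fun u hu => ?_⟩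
  have hs'u : Reach δ s' u := _root_.trans hs'' hu
  exact hmin (_root_.trans hs' hs'u) (fun v hv => _root_.trans hs'u hv) hs''

lemma IsLabelling.negligible_compl_isRecurrent [Finite S] [IsTrans S (Reach δ)]
    (h : IsLabelling δ α) : Negligible {x | 1 ≤ x ∧ IsRecurrent δ (α x)}ᶜ := by
  refine negligible_of_branching (NeZero.pos K) (fun x d hd hx hB hrec => hB ⟨?_, ?_⟩)
    fun x hx => ?_
  · exact (Nat.mul_pos hx (NeZero.pos K)).trans_le (Nat.le_add_right _ _)
  · exact hrec.2.of_reach ⟨⟨d, hd⟩, (h x hx ⟨d, hd⟩).symm⟩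
  · obtain ⟨_, ⟨d, rfl⟩, hrec⟩ := exists_reach_isRecurrent (δ := δ) (α x)
    rw [← h x hx d] at hrec
    refine ⟨d, d.isLt, not_not_intro ⟨?_, hrec⟩⟩
    exact (Nat.mul_pos hx (NeZero.pos K)).trans_le (Nat.le_add_right _ _)

lemma IsRecurrent.reach_self [IsTrans S (Reach δ)] {s : S} (hs : IsRecurrent δ s) :
    Reach δ s s :=
  _root_.trans (⟨0, rfl⟩ : Reach δ s (δ s 0)) (hs _ ⟨0, rfl⟩)

lemma IsRecurrent.reach_runDigits [IsTrans S (Reach δ)] {s : S} (hs : IsRecurrent δ s)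
    (t j : ℕ) : Reach δ s (runDigits δ t s j) := by
  induction t generalizing j with
  | zero => exact hs.reach_self
  | succ t ih => exact _root_.trans (ih _) ⟨_, rfl⟩

/-- The pairs of states at neighbouring positions `j` and `j + 1` among the `K ^ i` words of
length `i` read from `s`. -/
def consecutivePairs (δ : S → Fin K → S) (i : ℕ) (s : S) : Set (S × S) :=
  {p | ∃ j, j + 1 < K ^ i ∧ p = (runDigits δ i s j, runDigits δ i s (j + 1))}

lemma Reach.consecutivePairs_subset {s s' : S} (h : Reach δ s' s) (i : ℕ) :
    consecutivePairs δ i s ⊆ consecutivePairs δ (i + 1) s' := by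
  obtain ⟨d, rfl⟩ := h
  rintro _ ⟨j, hj, rfl⟩
  have hlt : d * K ^ i + j + 1 < K ^ (i + 1) := calc
    d * K ^ i + j + 1 < (d + 1) * K ^ i := by rw [add_one_mul]; lia
    _ ≤ K ^ (i + 1) := by rw [pow_succ']; exact Nat.mul_le_mul_right _ d.isLt
  refine ⟨d * K ^ i + j, hlt, ?_⟩
  rw [add_comm i 1, add_assoc, runDigits_add δ _ _ _ _ (Nat.lt_of_succ_lt hj),
    runDigits_add δ _ _ _ _ hj, runDigits_one]

lemma IsRecurrent.exists_consecutivePairs_subset [Finite S] [IsTrans S (Reach δ)] {s : S}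
    (hs : IsRecurrent δ s) :
    ∃ T, ∀ i s', Reach δ s' s → consecutivePairs δ i s ⊆ consecutivePairs δ T s' := by
  have hmono : Monotone fun i => consecutivePairs δ i s :=
    monotone_nat_of_le_succ fun i => hs.reach_self.consecutivePairs_subset i
  obtain ⟨n, hn⟩ := WellFoundedGT.monotone_chain_condition ⟨_, hmono⟩
  refine ⟨n + 1, fun i s' h => ?_⟩
  calc consecutivePairs δ i s ⊆ consecutivePairs δ (max n i) s := hmono (le_max_right n i)
    _ = consecutivePairs δ n s := (hn _ (le_max_left n i)).symm
    _ ⊆ consecutivePairs δ (n + 1) s' := h.consecutivePairs_subset n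

end Recurrence

section Period

/-- The sequence `f` has period `p` as long as one stays on the initial segment `[0, n)`. -/
def HasPeriodBelow {Ω : Type*} (f : ℕ → Ω) (p n : ℕ) : Prop :=
  ∀ j, j + p < n → f (j + p) = f j

variable {Ω S S' : Type*} {K l : ℕ}

lemma HasPeriodBelow.apply_add_mul {f : ℕ → Ω} {p n : ℕ} (h : HasPeriodBelow f p n) (i : ℕ)
    {j : ℕ} (hj : j + p * i < n) : f (j + p * i) = f j := by
  induction i with
  | zero => rfl
  | succ i ih =>
    rw [mul_add_one, ← add_assoc] at hj ⊢
    rw [h _ hj, ih ((Nat.le_add_right _ _).trans_lt hj)]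

lemma HasPeriodBelow.of_dvd {f : ℕ → Ω} {p q n : ℕ} (h : HasPeriodBelow f p n) (hpq : p ∣ q) :
    HasPeriodBelow f q n := by
  obtain ⟨i, rfl⟩ := hpq
  exact fun j hj => h.apply_add_mul i hj

lemma HasPeriodBelow.apply_mod {f : ℕ → Ω} {p n : ℕ} (h : HasPeriodBelow f p n) {j : ℕ}
    (hj : j < n) : f (j % p) = f j := by
  rw [← Nat.mod_add_div j p] at hj
  rw [← h.apply_add_mul _ hj, Nat.mod_add_div]

lemma exists_aligned_block {v M : ℕ} (hv : 0 < v) (hM : 2 * v ≤ M) (N : ℕ) :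
    ∃ y, N ≤ y * v ∧ (y + 1) * v ≤ N + M := by
  have hle := Nat.div_mul_le_self N v
  have hlt := Nat.lt_div_mul_add (a := N) hv
  exact ⟨N / v + 1, by rw [add_one_mul]; lia, by rw [add_one_mul, add_one_mul]; lia⟩

lemma injOn_mod_of_forall_not_dvd {u v R : ℕ} (h : ∀ c, 0 < c → c < R → ¬ v ∣ c * u) (X : ℕ) :
    Set.InjOn (fun i => (X + i) * u % v) (Set.Iio R) := by
  intro i hi j hj hij
  wlog hlt : i < j generalizing i j
  · by_contra hne
    exact hne (this hj hi hij.symm (by lia)).symm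
  have hsub : (X + j) * u - (X + i) * u = (j - i) * u := by rw [← Nat.sub_mul]; congr 1; lia
  have hle : (X + i) * u ≤ (X + j) * u := Nat.mul_le_mul_right _ (by lia)
  exact absurd (hsub ▸ (Nat.modEq_iff_dvd' hle).1 hij) (h (j - i) (by lia) (by simp at hj; lia))

lemma exists_close_of_card_mul_lt {T : Type*} [Finite T] {R W v : ℕ} (hW : 1 ≤ W)
    (hR : Nat.card T * W < R) (g : ℕ → T) {r : ℕ → ℕ} (hr : ∀ i < R, r i < v)
    (hinj : Set.InjOn r (Set.Iio R)) :
    ∃ i j, i < R ∧ j < R ∧ g i = g j ∧ r i < r j ∧ (r j - r i) * W ≤ v := by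
  cases nonempty_fintype T
  have hbucket (i : Fin R) : r i * W / v < W := by
    have hv : 0 < v := (hr i i.isLt).pos
    rw [Nat.div_lt_iff_lt_mul hv, mul_comm]
    exact Nat.mul_lt_mul_of_pos_left (hr i i.isLt) hW
  obtain ⟨i, j, hij, heq⟩ := Fintype.exists_ne_map_eq_of_card_lt
    (fun i : Fin R => (g i, (⟨r i * W / v, hbucket i⟩ : Fin W)))
    (by simpa [Nat.card_eq_fintype_card] using hR)
  simp only [Prod.mk.injEq, Fin.mk.injEq] at heq
  wlog hlt : r i < r j generalizing i j
  · have hne : r i ≠ r j := fun h => hij (Fin.ext (hinj i.isLt j.isLt h))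
    exact this j i hij.symm ⟨heq.1.symm, heq.2.symm⟩ (hne.symm.lt_of_le (not_lt.1 hlt))
  refine ⟨i, j, i.isLt, j.isLt, heq.1, hlt, ?_⟩
  have hi := Nat.div_mul_le_self (r i * W) v
  have hj := Nat.lt_div_mul_add (a := r j * W) (hr i i.isLt).pos
  rw [heq.2] at hi
  rw [Nat.sub_mul]
  lia

variable [NeZero K] [NeZero l] {δ : S → Fin K → S} {δ' : S' → Fin l → S'} {α : ℕ → S} {β : ℕ → S'}
  {τ : S → Ω} {τ' : S' → Ω}

omit [NeZero l] in
lemma IsLabelling.congr (h : IsLabelling δ α) {x y : ℕ} (hx : 1 ≤ x) (hy : 1 ≤ y)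
    (hxy : α x = α y) {t j : ℕ} (hj : j < K ^ t) : α (x * K ^ t + j) = α (y * K ^ t + j) := by
  rw [h.apply_mul_pow_add hx t hj, h.apply_mul_pow_add hy t hj, hxy]

/- Two blocks `P i, P j` of length `K ^ m` with equal labels, and the first blocks of length `l ^ n`
starting inside them, again with equal labels, are offset by different amounts `r i < r j`.
Transporting values along both coincidences shifts them by `r j - r i`. -/
lemma exists_period_of_agree [Finite S] [Finite S'] (hα : IsLabelling δ α) (hβ : IsLabelling δ' β)
    {m n R W X : ℕ} (hmn : 2 * l ^ n ≤ K ^ m) (hdvd : ∀ c, 0 < c → c < R → ¬ l ^ n ∣ c * K ^ m)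
    (hW : 1 ≤ W) (hR : Nat.card (S × S') * W < R) (hX : 1 ≤ X)
    (hagree : ∀ i, X * K ^ m ≤ i → i < (X + R) * K ^ m → τ (α i) = τ' (β i)) :
    ∃ N p, 1 ≤ p ∧ p * W ≤ l ^ n ∧ X * K ^ m ≤ N ∧ N + l ^ n ≤ (X + R) * K ^ m ∧
      HasPeriodBelow (fun s => τ (α (N + s))) p (l ^ n) := by
  have hln : 0 < l ^ n := pow_pos (NeZero.pos l) n
  set P : ℕ → ℕ := fun i => (X + i) * K ^ m with hP
  set r : ℕ → ℕ := fun i => P i % l ^ n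
  set Y : ℕ → ℕ := fun i => P i / l ^ n + 1
  have hr (i : ℕ) : r i < l ^ n := Nat.mod_lt _ hln
  have hY (i : ℕ) : Y i * l ^ n = P i + (l ^ n - r i) := by
    have hdiv : P i / l ^ n * l ^ n + r i = P i := Nat.div_add_mod' _ _
    have hlt := hr i
    change (P i / l ^ n + 1) * l ^ n = _
    rw [add_one_mul]
    lia
  obtain ⟨i, j, hi, hj, hg, hij, hle⟩ := exists_close_of_card_mul_lt hW hR
    (fun i => (α (X + i), β (Y i))) (fun i _ => hr i) (injOn_mod_of_forall_not_dvd hdvd X)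
  obtain ⟨hαij, hβij⟩ := Prod.mk.inj hg
  have hP_le {i : ℕ} (hi : i < R) : X * K ^ m ≤ P i ∧ P i + K ^ m ≤ (X + R) * K ^ m := by
    refine ⟨Nat.mul_le_mul_right _ (Nat.le_add_right _ _), ?_⟩
    rw [hP, ← Nat.succ_mul]
    exact Nat.mul_le_mul_right _ (by lia)
  have hrj := hr j
  have hPi := hP_le hi
  have hPj := hP_le hj
  refine ⟨Y j * l ^ n, r j - r i, by lia, hle, by grind, by grind, fun s hs => ?_⟩
  calc τ (α (Y j * l ^ n + (s + (r j - r i))))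
      = τ (α (P j + (l ^ n - r i + s))) := by rw [hY]; congr 2; lia
    _ = τ (α (P i + (l ^ n - r i + s))) := by
        rw [hα.congr (by lia) (by lia) hαij.symm (by lia)]
    _ = τ' (β (Y i * l ^ n + s)) := by
        rw [← add_assoc, ← hY, hagree _ (by grind) (by grind)]
    _ = τ' (β (Y j * l ^ n + s)) := by
        rw [hβ.congr (Nat.le_add_left _ _) (Nat.le_add_left _ _) hβij (by lia)]
    _ = τ (α (Y j * l ^ n + s)) := (hagree _ (by grind) (by grind)).symm

omit [NeZero K] in
lemma exists_pow_le_mul (hK : 2 ≤ K) {n : ℕ} (hn : 0 < n) : ∃ t, n ≤ K ^ t ∧ K ^ t ≤ K * n :=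
  ⟨Nat.log K n + 1, (Nat.lt_pow_succ_log_self hK n).le, by
    rw [pow_succ']
    exact Nat.mul_le_mul_left K (Nat.pow_log_le_self K hn.ne')⟩

lemma exists_prefix_of_block_subset {x y t N : ℕ} (htN : t ≤ N) (hlow : x * K ^ N ≤ y * K ^ t)
    (hhigh : (y + 1) * K ^ t ≤ (x + 1) * K ^ N) : ∃ i j, j < K ^ i ∧ y = x * K ^ i + j := by
  obtain ⟨i, rfl⟩ := Nat.exists_eq_add_of_le' htN
  have hKt : 0 < K ^ t := pow_pos (NeZero.pos K) t
  rw [pow_add, ← mul_assoc] at hlow hhigh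
  have hxy := Nat.le_of_mul_le_mul_right hlow hKt
  have hyx := Nat.le_of_mul_le_mul_right hhigh hKt
  rw [add_one_mul] at hyx
  exact ⟨i, y - x * K ^ i, by lia, by lia⟩

lemma exists_period_in_block [Finite S] [Finite S'] (hK : 2 ≤ K) (hl : 2 ≤ l)
    (hind : MultIndep K l) (hα : IsLabelling δ α) (hβ : IsLabelling δ' β)
    (hαβ : Negligible {n | τ (α n) ≠ τ' (β n)}) {x W : ℕ} (hx : 1 ≤ x) (hW : 1 ≤ W) :
    ∃ N n M p, 1 ≤ p ∧ p * W ≤ l ^ n ∧ x * K ^ N ≤ M ∧ M + l ^ n ≤ (x + 1) * K ^ N ∧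
      HasPeriodBelow (fun s => τ (α (M + s))) p (l ^ n) := by
  set R := Nat.card (S × S') * W + 1
  obtain ⟨m, n, hmn, hdvd⟩ := hind.exists_forall_not_dvd hK hl R
  have hKm : 0 < K ^ m := pow_pos (NeZero.pos K) m
  obtain ⟨N, hN⟩ := hαβ.exists_free_window (Nat.mul_pos (by lia : 0 < R + 2) hKm) x
  obtain ⟨z, hxz, hzx, hfree⟩ := hN (K ^ N) (x * K ^ N) (Nat.lt_pow_self hK).le le_rfl
  obtain ⟨X, hzX, hXz⟩ := exists_aligned_block hKm (M := 2 * K ^ m) le_rfl z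
  have hX : 1 ≤ X := by
    have : 0 < x * K ^ N := Nat.mul_pos hx (pow_pos (NeZero.pos K) N)
    exact Nat.pos_of_mul_pos_right (by lia : 0 < X * K ^ m)
  obtain ⟨M, p, hp, hpW, hXM, hMX, hper⟩ :=
    exists_period_of_agree hα hβ hmn hdvd hW (Nat.lt_succ_self _) hX fun i hi hi' => by
      simpa [Nat.add_sub_cancel' (hzX.trans hi)] using hfree (i - z) (by lia)
  exact ⟨N, n, M, p, hp, hpW, by lia, by lia, hper⟩

lemma exists_local_period [Finite S] [Finite S'] (hK : 2 ≤ K) (hl : 2 ≤ l) (hind : MultIndep K l)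
    (hα : IsLabelling δ α) (hβ : IsLabelling δ' β) (hαβ : Negligible {n | τ (α n) ≠ τ' (β n)})
    {x W : ℕ} (hx : 1 ≤ x) (hW : 1 ≤ W) :
    ∃ i j t p, j < K ^ i ∧ 1 ≤ p ∧ W * p ≤ K ^ t ∧
      HasPeriodBelow (fun u => τ (runDigits δ t (runDigits δ i (α x) j) u)) p (K ^ t) := by
  obtain ⟨N, n, M, p, hp, hpW, hxM, hMx, hper⟩ := exists_period_in_block hK hl hind hα hβ hαβ hx
    (Nat.mul_pos (by lia) hW : 1 ≤ 2 * K * W)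
  obtain ⟨t, hWt, htW⟩ := exists_pow_le_mul hK (Nat.mul_pos hW hp)
  have htn : 2 * K ^ t ≤ l ^ n := by linarith
  obtain ⟨y, hMy, hyM⟩ := exists_aligned_block (pow_pos (NeZero.pos K) t) htn M
  have htN : t ≤ N := by
    rw [← Nat.pow_le_pow_iff_right hK]
    lia
  obtain ⟨i, j, hj, rfl⟩ := exists_prefix_of_block_subset htN (by lia : x * K ^ N ≤ y * K ^ t)
    (by lia)
  refine ⟨i, j, t, p, hj, hp, hWt, fun u hu => ?_⟩
  have hy : 1 ≤ x * K ^ i + j :=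
    (Nat.mul_pos hx (pow_pos (NeZero.pos K) i)).trans_le (Nat.le_add_right _ _)
  have hshift {u : ℕ} (hu : u < K ^ t) : α (M + ((x * K ^ i + j) * K ^ t - M + u)) =
      runDigits δ t (runDigits δ i (α x) j) u := by
    rw [← add_assoc, Nat.add_sub_cancel' hMy, hα.apply_mul_pow_add hy t hu,
      hα.apply_mul_pow_add hx i hj]
  beta_reduce
  rw [← hshift hu, ← hshift (by lia), ← add_assoc _ u p]
  exact hper _ (by lia)

end Period

section Propagation

variable {Ω S S' : Type*} {K l : ℕ} [NeZero K] {δ : S → Fin K → S} {α : ℕ → S} {τ : S → Ω}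

lemma runDigits_eq_of_consecutive {i i' t y c u : ℕ} {s s' : S}
    (h₀ : runDigits δ i s y = runDigits δ i' s' c)
    (h₁ : runDigits δ i s (y + 1) = runDigits δ i' s' (c + 1)) (hu : u < 2 * K ^ t) :
    runDigits δ (i + t) s (y * K ^ t + u) = runDigits δ (i' + t) s' (c * K ^ t + u) := by
  rcases lt_or_ge u (K ^ t) with hlt | hge
  · rw [runDigits_add δ _ _ _ _ hlt, runDigits_add δ _ _ _ _ hlt, h₀]
  · obtain ⟨v, rfl⟩ := Nat.exists_eq_add_of_le hge
    have hv : v < K ^ t := by lia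
    rw [← add_assoc, ← add_assoc, ← add_one_mul, ← add_one_mul, runDigits_add δ _ _ _ _ hv,
      runDigits_add δ _ _ _ _ hv, h₁]

/- Since `p ≤ K ^ t`, positions `j` and `j + p` lie in two neighbouring blocks of length `K ^ t`, so
that the values there are controlled by a pair of neighbouring states. -/
lemma HasPeriodBelow.propagate {s s' : S} {T t p : ℕ} (hK : 2 ≤ K)
    (hsub : ∀ i, consecutivePairs δ i s ⊆ consecutivePairs δ T s') (hp : p ≤ K ^ t)
    (hper : HasPeriodBelow (fun j => τ (runDigits δ (T + t) s' j)) p (K ^ (T + t)))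
    {i : ℕ} (hi : i ≠ 0) :
    HasPeriodBelow (fun j => τ (runDigits δ (i + t) s j)) p (K ^ (i + t)) := by
  intro j hj
  have hKi : 2 ≤ K ^ i := hK.trans (Nat.le_self_pow hi K)
  obtain ⟨y, u, hy, hu, rfl⟩ :
      ∃ y u, y + 1 < K ^ i ∧ u + p < 2 * K ^ t ∧ j = y * K ^ t + u := by
    have hKt : 0 < K ^ t := pow_pos (NeZero.pos K) t
    have hle := Nat.div_mul_le_self j (K ^ t)
    have hlt := Nat.lt_div_mul_add (a := j) hKt
    rcases lt_or_ge (j / K ^ t + 1) (K ^ i) with hy | hy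
    · exact ⟨j / K ^ t, j - j / K ^ t * K ^ t, hy, by lia, by lia⟩
    · obtain ⟨y, hyi⟩ := Nat.exists_eq_add_of_le' hKi
      have hyj : y * K ^ t ≤ j := (Nat.mul_le_mul_right _ (by lia)).trans hle
      rw [pow_add, hyi, add_mul] at hj
      exact ⟨y, j - y * K ^ t, by lia, by lia, by lia⟩
  obtain ⟨c, hc, hpair⟩ := hsub i ⟨y, hy, rfl⟩
  obtain ⟨h₀, h₁⟩ := Prod.mk.inj hpair
  have hbound : (c + 2) * K ^ t ≤ K ^ (T + t) := by
    rw [pow_add]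
    exact Nat.mul_le_mul_right _ hc
  beta_reduce
  rw [add_assoc, runDigits_eq_of_consecutive h₀ h₁ hu,
    runDigits_eq_of_consecutive h₀ h₁ (by lia), ← add_assoc]
  exact hper _ (by lia)

variable [Finite S] [Finite S'] [NeZero l] {δ' : S' → Fin l → S'} {β : ℕ → S'} {τ' : S' → Ω}
  [IsTrans S (Reach δ)]

lemma exists_eventually_hasPeriodBelow (hK : 2 ≤ K) (hl : 2 ≤ l) (hind : MultIndep K l)
    (hα : IsLabelling δ α) (hβ : IsLabelling δ' β) (hαβ : Negligible {n | τ (α n) ≠ τ' (β n)})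
    {x : ℕ} (hx : 1 ≤ x) (hrec : IsRecurrent δ (α x)) :
    ∃ p, 1 ≤ p ∧
      ∀ᶠ t in atTop, HasPeriodBelow (fun j => τ (runDigits δ t (α x) j)) p (K ^ t) := by
  obtain ⟨T, hT⟩ := hrec.exists_consecutivePairs_subset
  obtain ⟨i, j, t₁, p, -, hp, hpt, hper⟩ :=
    exists_local_period hK hl hind hα hβ hαβ hx (pow_pos (NeZero.pos K) T)
  obtain ⟨t, rfl⟩ : ∃ t, t₁ = T + t := by
    refine Nat.exists_eq_add_of_le ((Nat.pow_le_pow_iff_right hK).1 ?_)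
    exact (Nat.le_mul_of_pos_right _ hp).trans hpt
  have hpK : p ≤ K ^ t := by
    rw [pow_add] at hpt
    exact Nat.le_of_mul_le_mul_left hpt (pow_pos (NeZero.pos K) T)
  refine ⟨p, hp, eventually_atTop.2 ⟨1 + t, fun n hn => ?_⟩⟩
  obtain ⟨r, rfl⟩ := Nat.exists_eq_add_of_le' ((Nat.le_add_left _ _).trans hn)
  exact hper.propagate hK (fun i' => hT i' _ (hrec _ (hrec.reach_runDigits i j))) hpK (by lia)

lemma exists_eventually_forall_hasPeriodBelow (hK : 2 ≤ K) (hl : 2 ≤ l) (hind : MultIndep K l)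
    (hα : IsLabelling δ α) (hβ : IsLabelling δ' β) (hαβ : Negligible {n | τ (α n) ≠ τ' (β n)}) :
    ∃ q, 1 ≤ q ∧ ∀ᶠ t in atTop, ∀ x, 1 ≤ x → IsRecurrent δ (α x) →
      HasPeriodBelow (fun j => τ (runDigits δ t (α x) j)) q (K ^ t) := by
  let ι := {s : S // ∃ x, 1 ≤ x ∧ α x = s ∧ IsRecurrent δ s}
  have hperiod (s : ι) : ∃ p, 1 ≤ p ∧
      ∀ᶠ t in atTop, HasPeriodBelow (fun j => τ (runDigits δ t s j)) p (K ^ t) := by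
    obtain ⟨_, x, hx, rfl, hrec⟩ := s
    exact exists_eventually_hasPeriodBelow hK hl hind hα hβ hαβ hx hrec
  choose p hp hper using hperiod
  cases nonempty_fintype ι
  refine ⟨∏ s, p s, Nat.one_le_iff_ne_zero.2 (Finset.prod_ne_zero_iff.2 fun s _ => ?_), ?_⟩
  · exact Nat.one_le_iff_ne_zero.1 (hp s)
  filter_upwards [eventually_all.2 hper] with t ht x hx hrec
  exact (ht ⟨α x, x, hx, rfl, hrec⟩).of_dvd (Finset.dvd_prod_of_mem p (Finset.mem_univ _))

end Propagation

section Blocks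

variable {Ω S : Type*} {K : ℕ}

lemma exists_periodic_eqOn {q : ℕ} {f : ℕ → Ω} {B : Set ℕ}
    (h : ∀ m ∈ B, ∀ n ∈ B, m ≡ n [MOD q] → f m = f n) :
    ∃ c : ℕ → Ω, Function.Periodic c q ∧ Set.EqOn f c B := by
  have hfactors : (fun m : B => f m).FactorsThrough fun m : B => (m : ZMod q) :=
    fun m n hmn => h m m.2 n n.2 ((ZMod.natCast_eq_natCast_iff _ _ _).1 hmn)
  refine ⟨fun n => Function.extend (fun m : B => (m : ZMod q)) (fun m : B => f m)
    (fun _ => f 0) n, fun n => by simp, fun m hm => ?_⟩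
  exact (hfactors.extend_apply _ ⟨m, hm⟩).symm

/-- The sequence `a` coincides with a sequence of period `q` on the integers whose base-`K`
representation is that of `x` followed by at least `t₀` digits. -/
def PeriodicOnBlocks (K q t₀ : ℕ) (a : ℕ → Ω) (x : ℕ) : Prop :=
  ∃ c : ℕ → Ω, Function.Periodic c q ∧
    ∀ t n, t₀ ≤ t → n / K ^ t = x → a n = c n

variable [NeZero K] {δ : S → Fin K → S} {α : ℕ → S} {τ : S → Ω} {q : ℕ}

lemma runDigits_zero_eq_iterate (δ : S → Fin K → S) (t : ℕ) (s : S) :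
    runDigits δ t s 0 = (δ · 0)^[t] s := by
  induction t with
  | zero => rfl
  | succ t ih => rw [runDigits, Nat.zero_div, ih, Function.iterate_succ_apply', Fin.ofNat_zero]

lemma exists_stable_runDigits_zero [Finite S] [NeZero q] (δ : S → Fin K → S) :
    ∃ e, 1 ≤ e ∧ ∀ t s, 1 ≤ t →
      runDigits δ (e * t) s 0 = runDigits δ e s 0 ∧ K ^ (e * t) ≡ K ^ e [MOD q] := by
  let f : S × ZMod q → S × ZMod q := Prod.map (δ · 0) ((K : ZMod q) * ·)
  have hf (n : ℕ) (s : S) : f^[n] (s, 1) = (runDigits δ n s 0, ((K ^ n : ℕ) : ZMod q)) := by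
    simp [f, Prod.map_iterate, runDigits_zero_eq_iterate, mul_left_iterate]
  obtain ⟨e, he, hidem⟩ := exists_iterate_add_self_eq f
  refine ⟨e, he, fun t s ht => ?_⟩
  have hstable : f^[e * t] = f^[e] := by
    induction t, ht using Nat.le_induction with
    | base => rw [mul_one]
    | succ t _ ih => rw [mul_add_one, Function.iterate_add, ih, ← Function.iterate_add, hidem]
  rw [← ZMod.natCast_eq_natCast_iff, ← Prod.mk.injEq, ← hf, ← hf, hstable]

lemma IsLabelling.exists_periodicOnBlocks [Finite S] (hα : IsLabelling δ α) (hK : 2 ≤ K)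
    (hq : 1 ≤ q) {P : ℕ → Prop} (hper : ∀ᶠ t in atTop, ∀ x, 1 ≤ x → P x →
      HasPeriodBelow (fun j => τ (runDigits δ t (α x) j)) q (K ^ t)) :
    ∃ e t₀, 1 ≤ e ∧ ∀ x, 1 ≤ x → P x → PeriodicOnBlocks (K ^ e) q t₀ (fun n => τ (α n)) x := by
  have : NeZero q := ⟨by lia⟩
  obtain ⟨t₁, ht₁⟩ := eventually_atTop.1 hper
  obtain ⟨e, he, hstable⟩ := exists_stable_runDigits_zero (q := q) δ
  have hqK : q ≤ K ^ (e * q) :=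
    (Nat.lt_pow_self hK).le.trans (Nat.pow_le_pow_right (by lia) (Nat.le_mul_of_pos_left q he))
  refine ⟨e, max t₁ (q + 1), he, fun x hx hPx => ?_⟩
  have hvalue (t j : ℕ) (ht : max t₁ (q + 1) ≤ t) (hj : j < K ^ (e * t)) :
      τ (α (x * K ^ (e * t) + j)) =
        τ (runDigits δ (e * q) (runDigits δ e (α x) 0) (j % q)) := by
    have het : t ≤ e * t := Nat.le_mul_of_pos_left t he
    obtain ⟨i, rfl⟩ : ∃ i, t = i + q := Nat.exists_eq_add_of_le' (by lia)
    rw [hα.apply_mul_pow_add hx _ hj, ← (ht₁ (e * (i + q)) (by lia) x hx hPx).apply_mod hj,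
      ← (hstable i (α x) (by lia)).1, ← runDigits_add δ _ _ _ _ ((j.mod_lt hq).trans_le hqK),
      zero_mul, zero_add, mul_add]
  obtain ⟨c, hc, heq⟩ := exists_periodic_eqOn (q := q) (f := fun n => τ (α n))
    (B := {n | ∃ t j, max t₁ (q + 1) ≤ t ∧ j < K ^ (e * t) ∧ n = x * K ^ (e * t) + j}) <| by
      rintro _ ⟨t, j, ht, hj, rfl⟩ _ ⟨t', j', ht', hj', rfl⟩ hmod
      have hKt : x * K ^ (e * t) ≡ x * K ^ (e * t') [MOD q] :=
        (((hstable t (α x) (by lia)).2.trans (hstable t' (α x) (by lia)).2.symm)).mul_left x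
      rw [hvalue t j ht hj, hvalue t' j' ht' hj', hKt.add_left_cancel hmod]
  refine ⟨c, hc, fun t n ht hn => heq ⟨t, n % K ^ (e * t), ht, Nat.mod_lt _ ?_, ?_⟩⟩
  · exact pow_pos (NeZero.pos K) _
  · rw [← pow_mul] at hn
    rw [← hn, Nat.div_add_mod']

end Blocks

theorem exists_negligible_compl_periodicOnBlocks {Ω : Type*} {k l : ℕ} (hk : 2 ≤ k) (hl : 2 ≤ l)
    (hind : MultIndep k l) {a b : ℕ → Ω} (ha : IsAutomatic k a) (hb : IsAutomatic l b)
    (hab : Negligible {n | a n ≠ b n}) :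
    ∃ e q t₀, 1 ≤ e ∧ 1 ≤ q ∧ Negligible {x | 1 ≤ x ∧ PeriodicOnBlocks (k ^ e) q t₀ a x}ᶜ := by
  have : NeZero k := ⟨by lia⟩
  have : NeZero l := ⟨by lia⟩
  obtain ⟨S, _, δ, α, τ, hα, ha⟩ := ha.exists_isLabelling hk
  obtain ⟨S', _, δ', β, τ', hβ, hb⟩ := hb.exists_isLabelling hl
  obtain rfl : a = fun n => τ (α n) := funext ha
  obtain ⟨e, he, htrans⟩ := exists_isTrans_reach_powStep δ
  have hK : 2 ≤ k ^ e := hk.trans (Nat.le_self_pow (by lia) k)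
  obtain ⟨q, hq, hper⟩ := exists_eventually_forall_hasPeriodBelow hK hl
    (by simpa using hind.pow he le_rfl) (hα.pow e) hβ (by simpa only [hb] using hab)
  obtain ⟨e', t₀, he', hblocks⟩ := (hα.pow e).exists_periodicOnBlocks hK hq hper
  refine ⟨e * e', q, t₀, Nat.mul_pos he he', hq, ?_⟩
  rw [pow_mul]
  exact (hα.pow e).negligible_compl_isRecurrent.mono
    (Set.compl_subset_compl.2 fun x hx => ⟨hx.1, hblocks x hx.1 hx.2⟩)

section Conclusion

variable {Ω : Type*} {K L : ℕ}

lemma exists_block_overlap (hK : 2 ≤ K) (hL : 2 ≤ L) (hind : MultIndep K L) {x y : ℕ} (hx : 1 ≤ x)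
    (hy : 1 ≤ y) (N : ℕ) :
    ∃ t u, N ≤ t ∧ N ≤ u ∧ x * K ^ t ≤ y * L ^ u ∧ 2 * (y * L ^ u) ≤ (2 * x + 1) * K ^ t := by
  have hx0 : (0 : ℝ) < x := mod_cast hx
  obtain ⟨t, u, ht, hu, hlow, hhigh⟩ := hind.exists_pow_div_pow_mem_Ioo hK hL
    (A := y / (x + 1 / 2)) (B := y / x) (by positivity) (by gcongr; linarith) N
  have hLu : (0 : ℝ) < L ^ u := by positivity
  rw [div_lt_div_iff₀ hLu hx0, mul_comm] at hhigh
  rw [div_lt_div_iff₀ (by positivity) hLu] at hlow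
  refine ⟨t, u, ht, hu, mod_cast hhigh.le, ?_⟩
  have hmiddle : (2 * (y * L ^ u) : ℝ) ≤ (2 * x + 1) * K ^ t := by linarith
  exact_mod_cast hmiddle

lemma exists_common_position (hK : 2 ≤ K) (hL : 2 ≤ L) (hind : MultIndep K L) {A : Set ℕ}
    (hA : Negligible A) {x y Q : ℕ} (hx : 1 ≤ x) (hy : 1 ≤ y) (hQ : 1 ≤ Q) (N r : ℕ) :
    ∃ m t u, N ≤ t ∧ N ≤ u ∧ m / K ^ t = x ∧ m / L ^ u = y ∧ m ≡ r [MOD Q] ∧ m ∉ A := by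
  obtain ⟨N₀, hN₀⟩ := hA.exists_free_window hQ (2 * y * (2 * x + 1))
  obtain ⟨t, u, ht, hu, hstart, hmiddle⟩ :=
    exists_block_overlap hK hL hind hx hy (max N ((2 * x + 1) * (N₀ + 1)))
  set H := L ^ u / (2 * x + 1)
  have hle : (2 * x + 1) * H ≤ L ^ u := Nat.mul_div_le _ _
  have hlt : L ^ u < (2 * x + 1) * H + (2 * x + 1) := Nat.lt_mul_div_succ _ (by lia)
  have hH : N₀ + 1 ≤ H := by
    rw [Nat.le_div_iff_mul_le (by lia), mul_comm]
    exact (le_of_max_le_right hu).trans (Nat.lt_pow_self hL).le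
  have hyL : L ^ u ≤ y * L ^ u := Nat.le_mul_of_pos_left _ hy
  have hHL : H ≤ L ^ u := Nat.div_le_self _ _
  have hHK : 2 * H ≤ K ^ t := by
    refine Nat.le_of_mul_le_mul_left ?_ (by lia : 0 < 2 * x + 1)
    linarith
  have hstart_le : y * L ^ u ≤ 2 * y * (2 * x + 1) * H := calc
    y * L ^ u ≤ y * (2 * ((2 * x + 1) * H)) := Nat.mul_le_mul_left y <| by
      have := Nat.mul_le_mul_left (2 * x + 1) (by lia : 1 ≤ H)
      lia
    _ = 2 * y * (2 * x + 1) * H := by ring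
  obtain ⟨z, hz, hzH, hfree⟩ := hN₀ H (y * L ^ u) (by lia) hstart_le
  obtain ⟨m, hm, hmr⟩ := Finset.mem_image.1
    ((Nat.image_Ico_mod z Q).symm ▸ Finset.mem_range.2 (r.mod_lt hQ))
  rw [Finset.mem_Ico] at hm
  refine ⟨m, t, u, by lia, by lia, Nat.div_eq_of_lt_le (by lia) (by lia),
    Nat.div_eq_of_lt_le (by lia) (by lia), hmr, ?_⟩
  simpa [Nat.add_sub_cancel' hm.1] using hfree (m - z) (by lia)

lemma PeriodicOnBlocks.exists_periodic_negligible (hK : 2 ≤ K) (hL : 2 ≤ L) (hind : MultIndep K L)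
    {a b : ℕ → Ω} (hab : Negligible {n | a n ≠ b n}) {q q' t₀ u₀ y : ℕ} (hq : 1 ≤ q)
    (hq' : 1 ≤ q') (ha : Negligible {x | 1 ≤ x ∧ PeriodicOnBlocks K q t₀ a x}ᶜ) (hy : 1 ≤ y)
    (hb : PeriodicOnBlocks L q' u₀ b y) :
    ∃ c : ℕ → Ω, Function.Periodic c q' ∧ Negligible {n | a n ≠ c n} := by
  obtain ⟨c, hc, hbc⟩ := hb
  refine ⟨c, hc, (ha.preimage_div (Nat.one_le_pow t₀ K (by lia))).mono ?_⟩
  intro n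
  contrapose
  intro hn
  simp only [Set.mem_ofPred_eq, Set.mem_compl_iff, not_not] at hn ⊢
  obtain ⟨hx, c', hc', hac'⟩ := hn
  obtain ⟨m, t, u, ht, hu, hmt, hmu, hmod, hm⟩ :=
    exists_common_position hK hL hind hab hx hy (Nat.mul_pos hq hq') (max t₀ u₀) n
  calc a n = c' n := hac' _ _ le_rfl rfl
    _ = c' m := by
      rw [← hc'.map_mod_nat n, ← hc'.map_mod_nat m, hmod.of_mul_right q']
    _ = a m := (hac' _ _ (le_of_max_le_left ht) hmt).symm
    _ = b m := by simpa using hm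
    _ = c m := hbc _ _ (le_of_max_le_right hu) hmu
    _ = c n := by rw [← hc.map_mod_nat n, ← hc.map_mod_nat m, hmod.of_mul_left q]

end Conclusion

theorem main_theorem_general {Ω : Type*} (k l : ℕ) (hk : 2 ≤ k) (hl : 2 ≤ l)
    (hind : MultIndep k l) (a b : ℕ → Ω) (ha : IsAutomatic k a) (hb : IsAutomatic l b)
    (hae : upperDensity {n : ℕ | a n ≠ b n} = 0) :
    ∃ c : ℕ → Ω, (∃ q : ℕ, 1 ≤ q ∧ ∀ n : ℕ, c (n + q) = c n) ∧
      upperDensity {n : ℕ | a n ≠ c n} = 0 ∧ upperDensity {n : ℕ | b n ≠ c n} = 0 := by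
  simp only [upperDensity_eq_zero_iff_negligible] at hae ⊢
  have hba : Negligible {n | b n ≠ a n} := by simpa only [ne_comm] using hae
  obtain ⟨e, q, t₀, he, hq, hG⟩ := exists_negligible_compl_periodicOnBlocks hk hl hind ha hb hae
  obtain ⟨e', q', u₀, he', hq', hG'⟩ :=
    exists_negligible_compl_periodicOnBlocks hl hk hind.symm hb ha hba
  obtain ⟨y, hy⟩ := hG'.exists_notMem
  obtain ⟨hypos, hyb⟩ := Set.notMem_compl_iff.1 hy
  obtain ⟨c, hc, hac⟩ := hyb.exists_periodic_negligible (hk.trans (Nat.le_self_pow (by lia) k))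
    (hl.trans (Nat.le_self_pow (by lia) l)) (hind.pow he he') hae hq hq' hG hypos
  refine ⟨c, ⟨q', hq', hc⟩, hac, (hba.union hac).mono fun n hbc => ?_⟩
  by_cases hban : b n = a n
  · exact Or.inr fun hacn => hbc (hban.trans hacn)
  · exact Or.inl hban

/-- **Main Theorem** (density version of Cobham's theorem). If `k, l ≥ 2` are
multiplicatively independent, `a` is `k`-automatic, `b` is `l`-automatic, and `a`
and `b` coincide almost everywhere, then there is a periodic sequence `c` with
which both `a` and `b` coincide almost everywhere. -/
theorem main_theorem {Ω : Type} [Fintype Ω] (k l : ℕ) (hk : 2 ≤ k) (hl : 2 ≤ l)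
    (hind : MultIndep k l) (a b : ℕ → Ω)
    (ha : IsAutomatic k a) (hb : IsAutomatic l b)
    (hae : upperDensity {n : ℕ | a n ≠ b n} = 0) :
    ∃ c : ℕ → Ω, (∃ q : ℕ, 1 ≤ q ∧ ∀ n : ℕ, c (n + q) = c n) ∧
      upperDensity {n : ℕ | a n ≠ c n} = 0 ∧
      upperDensity {n : ℕ | b n ≠ c n} = 0 :=
  main_theorem_general k l hk hl hind a b ha hb hae
end

section
/- Let a be a k-automatic sequence (k ≥ 2). Then there exists a power k′ = k^t of k (t ≥ 1) such that a is produced by a k′-automaton which is idempotent and ignores the leading 0's. -/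
open Filter

/-!
The automaton which only tracks the number read so far, `n ↦ k * n + d`, is universal: any
`k`-automaton that ignores the leading `0`'s receives a morphism of automata from it, sending `n`
to the state reached on `n`. Reading `t` digits at once turns `n ↦ k * n + d` into
`n ↦ k ^ t * n + d`, so the `t`-th block automaton reaches the same state on every `n`. A block of
zeros acts as the `t`-th iterate of the action of `0`, and some positive power of this element of
the finite monoid of self-maps of the states is idempotent. To ignore the leading `0`'s in the
first place, add a new initial state with a loop labelled by `0`.
-/

theorem exists_pos_isIdempotentElem_pow {M : Type*} [Monoid M] [Finite M] (x : M) :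
    ∃ n, 0 < n ∧ IsIdempotentElem (x ^ n) := by
  -- For the discrete topology, the positive powers of `x` form a compact subsemigroup.
  let _ : TopologicalSpace M := ⊥
  have : DiscreteTopology M := ⟨rfl⟩
  obtain ⟨_, ⟨n, hn, rfl⟩, hidem⟩ := exists_idempotent_in_compact_subsemigroup
    (fun _ : M => continuous_of_discreteTopology) ((x ^ ·) '' Set.Ioi 0)
    (Set.nonempty_Ioi.image _) (Set.toFinite _).isCompact <| by
      rintro _ ⟨m, hm, rfl⟩ _ ⟨n, _, rfl⟩
      exact ⟨m + n, Nat.add_pos_left hm n, pow_add x m n⟩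
  exact ⟨n, hn, hidem⟩

theorem exists_pos_iterate_idempotent {α : Type*} [Finite α] (f : α → α) :
    ∃ n, 0 < n ∧ ∀ x, f^[n] (f^[n] x) = f^[n] x := by
  have : Finite (Function.End α) := inferInstanceAs (Finite (α → α))
  let g : Function.End α := f
  obtain ⟨n, hn, hidem⟩ := exists_pos_isIdempotentElem_pow g
  have hpow : g ^ n = (f^[n] : α → α) :=
    hom_coe_pow (fun h : Function.End α => h) rfl (fun _ _ => rfl) g n
  exact ⟨n, hn, fun x => congrFun (hpow ▸ hidem) x⟩

section Representation

variable {k : ℕ}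

theorem map_val_kRepr (hk : 1 < k) (n : ℕ) :
    (kRepr k n).map Fin.val = (Nat.digits k n).reverse := by
  simp [kRepr, hk, List.map_pmap]

theorem kRepr_zero : kRepr k 0 = [] := by
  simp [kRepr]

theorem ne_zero_of_kRepr_eq_cons [NeZero k] (hk : 1 < k) {n : ℕ} {d : Fin k} {w : List (Fin k)}
    (h : kRepr k n = d :: w) : d ≠ 0 := by
  have hdigits : Nat.digits k n = (w.map Fin.val).reverse ++ [d.val] := by
    rw [← List.reverse_reverse (Nat.digits k n), ← map_val_kRepr hk, h]
    simp
  have hn : n ≠ 0 := by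
    rintro rfl
    simp at hdigits
  simpa [hdigits] using Nat.getLast_digit_ne_zero k hn

/-- The transition function of the infinite automaton whose state is the number represented in
base `k` by the word read so far. -/
def appendDigit (k n : ℕ) (d : Fin k) : ℕ :=
  k * n + d

theorem kRepr_appendDigit (hk : 1 < k) {n : ℕ} {d : Fin k} (h : appendDigit k n d ≠ 0) :
    kRepr k (appendDigit k n d) = kRepr k n ++ [d] := by
  have hnd : (d : ℕ) ≠ 0 ∨ n ≠ 0 := by
    contrapose! h
    simp [appendDigit, h]
  apply List.map_injective_iff.mpr Fin.val_injective
  simp [map_val_kRepr hk, appendDigit, add_comm (k * n), Nat.digits_add k hk d n d.isLt hnd]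

theorem run_appendDigit_kRepr (hk : 1 < k) (n : ℕ) : run (appendDigit k) 0 (kRepr k n) = n :=
  calc
    run (appendDigit k) 0 (kRepr k n)
      = ((kRepr k n).map Fin.val).foldl (fun m d => k * m + d) 0 := by
      rw [List.foldl_map]
      rfl
    _ = Nat.ofDigits k (Nat.digits k n) := by
      simp [map_val_kRepr hk, Nat.ofDigits_eq_foldr, add_comm]
    _ = n := Nat.ofDigits_digits k n

end Representation

section Automaton

variable {S S' : Type*} {k : ℕ}

theorem map_run {δ : S → Fin k → S} {δ' : S' → Fin k → S'} {F : S → S'}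
    (hF : ∀ s d, F (δ s d) = δ' (F s) d) (s : S) (w : List (Fin k)) :
    F (run δ s w) = run δ' (F s) w :=
  (List.foldl_hom F fun s d => (hF s d).symm).symm

theorem run_replicate (δ : S → Fin k → S) (s : S) (t : ℕ) (d : Fin k) :
    run δ s (List.replicate t d) = (δ · d)^[t] s := by
  induction t generalizing s with
  | zero => rfl
  | succ _ ih => exact ih (δ s d)

theorem run_kRepr_appendDigit [NeZero k] (hk : 1 < k) {δ : S → Fin k → S} {s₀ : S}
    (h₀ : δ s₀ 0 = s₀) (n : ℕ) (d : Fin k) :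
    run δ s₀ (kRepr k (appendDigit k n d)) = δ (run δ s₀ (kRepr k n)) d := by
  by_cases h : appendDigit k n d = 0
  · obtain ⟨rfl, rfl⟩ : n = 0 ∧ d = 0 := by
      simpa [appendDigit, NeZero.ne k] using h
    simp [h, kRepr_zero, run, h₀]
  · simp [kRepr_appendDigit hk h, run]

/-- The automaton `(δ, s₀)` with a new initial state `none`, which has a loop labelled by `0` and
otherwise behaves like `s₀`. -/
def ignoreLeadingZeros [NeZero k] (δ : S → Fin k → S) (s₀ : S) : Option S → Fin k → Option S
  | none, d => if d = 0 then none else some (δ s₀ d)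
  | some s, d => some (δ s d)

theorem run_ignoreLeadingZeros_kRepr [NeZero k] (hk : 1 < k) (δ : S → Fin k → S) (s₀ : S) (n : ℕ) :
    (run (ignoreLeadingZeros δ s₀) none (kRepr k n)).getD s₀ = run δ s₀ (kRepr k n) := by
  cases h : kRepr k n with
  | nil => rfl
  | cons d w =>
    have hd : ignoreLeadingZeros δ s₀ none d = some (δ s₀ d) :=
      if_neg (ne_zero_of_kRepr_eq_cons hk h)
    have hw : some (run δ (δ s₀ d) w) = run (ignoreLeadingZeros δ s₀) (some (δ s₀ d)) w :=
      map_run (fun _ _ => rfl) _ _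
    rw [run, List.foldl_cons, hd, ← run, ← hw]
    rfl

theorem IsAutomatic.exists_ignoresLeadingZeros {Ω : Type*} [NeZero k] (hk : 1 < k) {a : ℕ → Ω}
    (ha : IsAutomatic k a) :
    ∃ (S : Type) (_ : Fintype S) (δ : S → Fin k → S) (s₀ : S) (τ : S → Ω),
      δ s₀ 0 = s₀ ∧ ∀ n, a n = τ (run δ s₀ (kRepr k n)) := by
  obtain ⟨S, _, δ, s₀, τ, hτ⟩ := ha
  refine ⟨Option S, inferInstance, ignoreLeadingZeros δ s₀, none, fun s => τ (s.getD s₀),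
    by simp [ignoreLeadingZeros], fun n => ?_⟩
  simp only [run_ignoreLeadingZeros_kRepr hk, hτ]

/-- The transition function of the `k ^ t`-automaton which reads `t` base-`k` digits at once.
Since `finFunctionFinEquiv` lists the least significant digit first, its word is reversed. -/
def blockStep (δ : S → Fin k → S) (t : ℕ) (s : S) (d : Fin (k ^ t)) : S :=
  run δ s (List.ofFn (finFunctionFinEquiv.symm d)).reverse

theorem run_appendDigit_reverse_ofFn (n : ℕ) {t : ℕ} (f : Fin t → Fin k) :
    run (appendDigit k) n (List.ofFn f).reverse =
      appendDigit (k ^ t) n (finFunctionFinEquiv f) := by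
  simp only [appendDigit, run, finFunctionFinEquiv_apply, List.foldl_reverse]
  induction t with
  | zero => simp
  | succ t ih =>
    simp only [List.ofFn_succ, List.foldr_cons, ih, Fin.sum_univ_succ, Fin.val_succ, pow_succ,
      Fin.val_zero, pow_zero, ← mul_assoc, ← Finset.sum_mul]
    ring

theorem blockStep_appendDigit (t n : ℕ) (d : Fin (k ^ t)) :
    blockStep (appendDigit k) t n d = appendDigit (k ^ t) n d := by
  rw [blockStep, run_appendDigit_reverse_ofFn, Equiv.apply_symm_apply]

theorem blockStep_zero [NeZero k] (δ : S → Fin k → S) (t : ℕ) (s : S) :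
    blockStep δ t s 0 = (δ · 0)^[t] s := by
  have hdigits : finFunctionFinEquiv.symm (0 : Fin (k ^ t)) = fun _ => 0 := by
    rw [Equiv.symm_apply_eq, Fin.ext_iff, finFunctionFinEquiv_apply]
    simp
  rw [blockStep, hdigits, List.ofFn_const, List.reverse_replicate, run_replicate]

theorem run_blockStep_kRepr [NeZero k] (hk : 1 < k) {δ : S → Fin k → S} {s₀ : S}
    (h₀ : δ s₀ 0 = s₀) {t : ℕ} (ht : t ≠ 0) (n : ℕ) :
    run (blockStep δ t) s₀ (kRepr (k ^ t) n) = run δ s₀ (kRepr k n) := by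
  let F : ℕ → S := fun n => run δ s₀ (kRepr k n)
  have hF (n : ℕ) (d : Fin k) : F (appendDigit k n d) = δ (F n) d :=
    run_kRepr_appendDigit hk h₀ n d
  have hFt (n : ℕ) (d : Fin (k ^ t)) : F (appendDigit (k ^ t) n d) = blockStep δ t (F n) d := by
    rw [← blockStep_appendDigit]
    exact map_run hF n _
  have hF0 : F 0 = s₀ := by
    simp [F, kRepr_zero, run]
  calc
    run (blockStep δ t) s₀ (kRepr (k ^ t) n)
      = F (run (appendDigit (k ^ t)) 0 (kRepr (k ^ t) n)) := by rw [map_run hFt, hF0]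
    _ = F n := by rw [run_appendDigit_kRepr (Nat.one_lt_pow ht hk)]

theorem exists_pos_blockStep_zero_idempotent [NeZero k] [Finite S] (δ : S → Fin k → S) :
    ∃ t, 0 < t ∧ ∀ s, blockStep δ t (blockStep δ t s 0) 0 = blockStep δ t s 0 := by
  simpa only [blockStep_zero] using exists_pos_iterate_idempotent (δ · 0)

end Automaton

/-- Every `k`-automatic sequence is produced by an idempotent `k^t`-automaton
(for some power `k^t` of `k`, `t ≥ 1`) which ignores the leading `0`'s. -/
theorem exists_idempotent_automaton {Ω : Type} (k : ℕ) (hk : 2 ≤ k)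
    (a : ℕ → Ω) (ha : IsAutomatic k a) :
    ∃ t : ℕ, 1 ≤ t ∧
      ∃ (S : Type) (_ : Fintype S) (δ : S → Fin (k ^ t) → S) (s₀ : S) (τ : S → Ω),
        (∀ z : Fin (k ^ t), (z : ℕ) = 0 → δ s₀ z = s₀) ∧
        (∀ z : Fin (k ^ t), (z : ℕ) = 0 → ∀ s : S, δ (δ s z) z = δ s z) ∧
        ∀ n : ℕ, a n = τ (run δ s₀ (kRepr (k ^ t) n)) := by
  have : NeZero k := ⟨by lia⟩
  obtain ⟨S, _, δ, s₀, τ, h₀, hτ⟩ := ha.exists_ignoresLeadingZeros hk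
  obtain ⟨t, ht, hidem⟩ := exists_pos_blockStep_zero_idempotent δ
  refine ⟨t, ht, S, inferInstance, blockStep δ t, s₀, τ, fun z hz => ?_, fun z hz s => ?_,
    fun n => ?_⟩
  · rw [Fin.val_eq_zero_iff.mp hz, blockStep_zero]
    exact Function.iterate_fixed h₀ t
  · rw [Fin.val_eq_zero_iff.mp hz, hidem]
  · rw [run_blockStep_kRepr hk h₀ ht.ne', hτ]
end

section
/- In the setting of the previous lemma (k, l ≥ 2 multiplicatively independent, a produced by an idempotent k-automaton 𝒜 ignoring leading 0's, b produced by an idempotent l-automaton ℬ ignoring leading 0's, C and D strongly connected components of 𝒜 and ℬ respectively, and s ∈ C, r ∈ D the states for which each Z_m has positive upper density), if moreover a and b coincide almost everywhere, then the sequences ã = a_{𝒜,s} and b̃ = a_{ℬ,r} are equal: ã(m) = b̃(m) for all m ∈ ℕ. -/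
open Filter

/-!
If `ã m ≠ b̃ m`, then each `n ∈ Z_{m+1}` makes `a` and `b` differ at `n + m`. So a translate of
`Z_{m+1}` lies in `{n | a n ≠ b n}`, which is impossible because upper density is monotone and
translation invariant.
-/

theorem limsup_add_of_tendsto {ι R : Type*} {F : Filter ι} [F.NeBot] [AddCommGroup R]
    [ConditionallyCompleteLinearOrder R] [DenselyOrdered R] [AddLeftMono R] [TopologicalSpace R]
    [OrderTopology R] {u v : ι → R} {c : R} (hu : F.IsBoundedUnder (· ≤ ·) u)
    (hu' : F.IsBoundedUnder (· ≥ ·) u) (hv : Tendsto v F (nhds c)) :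
    limsup (u + v) F = limsup u F + c := by
  apply le_antisymm
  · calc limsup (u + v) F ≤ limsup u F + limsup v F :=
          limsup_add_le hu' hu hv.isCoboundedUnder_le hv.isBoundedUnder_le
      _ = limsup u F + c := by rw [hv.limsup_eq]
  · calc limsup u F + c = limsup u F + liminf v F := by rw [hv.liminf_eq]
      _ ≤ limsup (u + v) F :=
          le_limsup_add hu hu'.isCoboundedUnder_le hv.isBoundedUnder_le hv.isBoundedUnder_ge

section Count

variable (p : ℕ → Prop) [DecidablePred p]

theorem isBoundedUnder_le_count_div (F : Filter ℕ) :
    F.IsBoundedUnder (· ≤ ·) fun n ↦ (Nat.count p n : ℝ) / n :=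
  isBoundedUnder_of ⟨1, fun n ↦
    div_le_one_of_le₀ (Nat.cast_le.mpr (Nat.count_le p)) n.cast_nonneg⟩

theorem isBoundedUnder_ge_count_div (F : Filter ℕ) :
    F.IsBoundedUnder (· ≥ ·) fun n ↦ (Nat.count p n : ℝ) / n :=
  isBoundedUnder_of ⟨0, fun _ ↦ by positivity⟩

theorem abs_count_add_right_sub_count_le (m n : ℕ) :
    |(Nat.count (fun i ↦ p (i + m)) n : ℝ) - Nat.count p n| ≤ m := by
  have count_split : Nat.count (fun i ↦ p (i + m)) n + Nat.count p m =
      Nat.count p n + Nat.count (fun i ↦ p (n + i)) m := by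
    rw [← Nat.count_add', Nat.count_add]
  have left_le : Nat.count p m ≤ m := Nat.count_le p
  have right_le : Nat.count (fun i ↦ p (n + i)) m ≤ m := Nat.count_le _
  rw [abs_sub_le_iff, sub_le_iff_le_add', sub_le_iff_le_add']
  norm_cast
  omega

theorem tendsto_count_add_right_div_sub_count_div (m : ℕ) :
    Tendsto ((fun n : ℕ ↦ (Nat.count (fun i ↦ p (i + m)) n : ℝ) / n) -
      fun n : ℕ ↦ (Nat.count p n : ℝ) / n) atTop (nhds 0) := by
  refine squeeze_zero_norm (fun n ↦ ?_) (tendsto_const_div_atTop_nhds_zero_nat (m : ℝ))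
  rw [Pi.sub_apply, ← sub_div, norm_div, Real.norm_eq_abs, Real.norm_natCast]
  gcongr
  exact abs_count_add_right_sub_count_le p m n

end Count

theorem upperDensity_eq_limsup_count (A : Set ℕ) [DecidablePred (· ∈ A)] :
    upperDensity A = limsup (fun n ↦ (Nat.count (· ∈ A) n : ℝ) / n) atTop := by
  have card_inter_Iio (n : ℕ) : Nat.card ↥(A ∩ Set.Iio n) = Nat.count (· ∈ A) n := by
    rw [Nat.count_eq_card_filter_range, Nat.card_coe_set_eq, ← Set.ncard_coe_finset]
    congr 1
    ext i
    simp [and_comm]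
  simp only [upperDensity, card_inter_Iio]

theorem upperDensity_mono {A B : Set ℕ} (hAB : A ⊆ B) : upperDensity A ≤ upperDensity B := by
  classical
  rw [upperDensity_eq_limsup_count, upperDensity_eq_limsup_count]
  have count_le (n : ℕ) : Nat.count (· ∈ A) n ≤ Nat.count (· ∈ B) n :=
    Nat.count_mono_left fun _ _ hi ↦ hAB hi
  exact limsup_le_limsup
    (Eventually.of_forall fun n ↦ div_le_div_of_nonneg_right (by exact_mod_cast count_le n)
      n.cast_nonneg)
    (isBoundedUnder_ge_count_div _ _).isCoboundedUnder_le (isBoundedUnder_le_count_div _ _)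

theorem upperDensity_preimage_add_right (A : Set ℕ) (m : ℕ) :
    upperDensity ((· + m) ⁻¹' A) = upperDensity A := by
  classical
  rw [upperDensity_eq_limsup_count, upperDensity_eq_limsup_count]
  have hlim := limsup_add_of_tendsto (isBoundedUnder_le_count_div (· ∈ A) atTop)
    (isBoundedUnder_ge_count_div _ _) (tendsto_count_add_right_div_sub_count_div (· ∈ A) m)
  rwa [add_sub_cancel, add_zero] at hlim

theorem tilde_sequences_equal_general {Ω : Type*} {a b α β : ℕ → Ω}
    (hZ : ∀ m, 0 < upperDensity {n | ∀ i < m, a (n + i) = α i ∧ b (n + i) = β i})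
    (hae : upperDensity {n | a n ≠ b n} = 0) : α = β := by
  ext m
  by_contra hne
  have mismatch : {n | ∀ i < m + 1, a (n + i) = α i ∧ b (n + i) = β i} ⊆
      (· + m) ⁻¹' {n | a n ≠ b n} := by
    intro n hn
    obtain ⟨han, hbn⟩ := hn m m.lt_succ_self
    rwa [Set.mem_preimage, Set.mem_ofPred_eq, han, hbn]
  refine lt_irrefl (0 : ℝ) ?_
  calc 0 < upperDensity {n | ∀ i < m + 1, a (n + i) = α i ∧ b (n + i) = β i} := hZ (m + 1)
    _ ≤ upperDensity ((· + m) ⁻¹' {n | a n ≠ b n}) := upperDensity_mono mismatch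
    _ = upperDensity {n | a n ≠ b n} := upperDensity_preimage_add_right _ m
    _ = 0 := hae

/-- In the setting of the previous lemma, if moreover `a` and `b` coincide almost
everywhere, then the sequences `ã = a_{𝒜,s}` and `b̃ = a_{ℬ,r}` are equal. -/
theorem tilde_sequences_equal {S S' Ω : Type}
    [Fintype S] [Fintype S'] [Fintype Ω]
    (k l : ℕ) (hk : 2 ≤ k) (hl : 2 ≤ l) (hind : MultIndep k l)
    (δ : S → Fin k → S) (s₀ : S) (τ : S → Ω)
    (δ' : S' → Fin l → S') (s₀' : S') (τ' : S' → Ω)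
    (z₀ : Fin k) (hz₀ : (z₀ : ℕ) = 0) (z₀' : Fin l) (hz₀' : (z₀' : ℕ) = 0)
    (hzero : δ s₀ z₀ = s₀) (hzero' : δ' s₀' z₀' = s₀')
    (hidem : ∀ s : S, δ (δ s z₀) z₀ = δ s z₀)
    (hidem' : ∀ s : S', δ' (δ' s z₀') z₀' = δ' s z₀')
    (hacc : ∀ s : S, ∃ w : List (Fin k), run δ s₀ w = s)
    (hacc' : ∀ s : S', ∃ w : List (Fin l), run δ' s₀' w = s)
    (a : ℕ → Ω) (b : ℕ → Ω)
    (ha : ∀ n : ℕ, a n = τ (run δ s₀ (kRepr k n)))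
    (hb : ∀ n : ℕ, b n = τ' (run δ' s₀' (kRepr l n)))
    (C : Set S) (hC : IsSCC δ C) (D : Set S') (hD : IsSCC δ' D)
    (s : S) (hs : s ∈ C) (r : S') (hr : r ∈ D)
    (hZ : ∀ m : ℕ,
      0 < upperDensity {n : ℕ | ∀ i < m,
        a (n + i) = τ (run δ s (kRepr k i)) ∧
        b (n + i) = τ' (run δ' r (kRepr l i))})
    (hae : upperDensity {n : ℕ | a n ≠ b n} = 0) :
    ∀ m : ℕ, τ (run δ s (kRepr k m)) = τ' (run δ' r (kRepr l m)) := by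
  exact congrFun (tilde_sequences_equal_general hZ hae)
end

section
/- Let k, l ≥ 2 be multiplicatively independent integers. Let a be a k-automatic sequence and b an l-automatic sequence, both with values in a finite set Ω. Suppose that a and b coincide almost everywhere and that both a and b are uniformly recurrent. Then a = b and this common sequence is periodic. (One may assume as input Fagnot's theorem: if k, l are multiplicatively independent, a is k-automatic, b is l-automatic, and ℒ(a) = ℒ(b), then a and b are ultimately periodic.) -/
open Filter

/-!
A set of upper density zero has a thick complement, so `a` and `b` agree on arbitrarily long
intervals. By uniform recurrence each factor of `a` occurs inside such an interval, hence also
in `b`, and conversely; thus `a` and `b` have the same language and Fagnot's theorem makes both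
ultimately periodic. Any relation `a (n + q) = a n` that fails somewhere fails with bounded gaps,
again by uniform recurrence, so both sequences are in fact periodic. Finally the agreement set of
two periodic sequences is invariant under a common period, and a thick set invariant under a
translation is everything.
-/

/-- A set of natural numbers is thick if it contains arbitrarily long intervals; equivalently, its
complement is not syndetic. Thickness of `{n | a n = b n}` is the weakening of almost everywhere
coincidence of `a` and `b` that the argument uses. -/
def IsThick (A : Set ℕ) : Prop :=
  ∀ M : ℕ, ∃ N : ℕ, ∀ j < M, N + j ∈ A

/-- A sequence is ultimately periodic if it satisfies `a (n + q) = a n` from some point on, for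
some `q ≥ 1`. -/
def IsUltimatelyPeriodic {Ω : Type*} (a : ℕ → Ω) : Prop :=
  ∃ q : ℕ, 1 ≤ q ∧ ∃ N : ℕ, ∀ n : ℕ, N ≤ n → a (n + q) = a n

/-- The statement of Fagnot's theorem: automatic sequences with respect to multiplicatively
independent bases that have the same language are ultimately periodic. It enters the development
as a hypothesis. -/
def FagnotStatement.{u} : Prop :=
  ∀ (Ω : Type u) (k l : ℕ), 2 ≤ k → 2 ≤ l → MultIndep k l →
    ∀ a b : ℕ → Ω, IsAutomatic k a → IsAutomatic l b →
    (∀ w : List Ω, IsFactor a w ↔ IsFactor b w) →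
    IsUltimatelyPeriodic a ∧ IsUltimatelyPeriodic b

theorem isThick_of_eventually_mem {A : Set ℕ} (hA : ∀ᶠ n in atTop, n ∈ A) : IsThick A := by
  obtain ⟨N, hN⟩ := eventually_atTop.mp hA
  exact fun _ => ⟨N, fun j _ => hN (N + j) (Nat.le_add_right N j)⟩

theorem IsThick.eq_univ_of_periodic {A : Set ℕ} {q : ℕ} (hA : IsThick A) (hq : 0 < q)
    (hper : Function.Periodic (· ∈ A) q) : A = Set.univ := by
  refine Set.eq_univ_of_forall fun n => ?_
  obtain ⟨N, hN⟩ := hA q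
  obtain ⟨j, hj, hmod⟩ : ∃ j < q, (N + j) % q = n % q := by
    obtain ⟨r, rfl⟩ := Nat.exists_eq_succ_of_ne_zero hq.ne'
    refine ⟨(n + N * r) % (r + 1), Nat.mod_lt _ hq, ?_⟩
    have hshift : N + (n + N * r) = n + N * (r + 1) := by ring
    rw [Nat.add_mod_mod, hshift, Nat.add_mul_mod_self_right]
  have hiff : (N + j ∈ A) = (n ∈ A) := by
    rw [← hper.map_mod_nat (N + j), hmod, hper.map_mod_nat]
  exact hiff.mp (hN j hj)

theorem eq_of_periodic_of_isThick {Ω : Type*} {a b : ℕ → Ω} {p q : ℕ}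
    (ha : Function.Periodic a p) (hb : Function.Periodic b q) (hp : 0 < p) (hq : 0 < q)
    (hab : IsThick {n | a n = b n}) : a = b := by
  have ha' : Function.Periodic a (p * q) := by simpa [Nat.mul_comm] using ha.nat_mul q
  have hb' : Function.Periodic b (p * q) := by simpa using hb.nat_mul p
  have huniv : {n | a n = b n} = Set.univ :=
    hab.eq_univ_of_periodic (Nat.mul_pos hp hq) fun n => by
      simp only [Set.mem_ofPred_eq, ha' n, hb' n]
  exact funext (Set.eq_univ_iff_forall.mp huniv)

theorem natCard_inter_Iio_le (A : Set ℕ) (n : ℕ) : Nat.card ↥(A ∩ Set.Iio n) ≤ n := by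
  simpa using Nat.card_mono (Set.finite_Iio n) (Set.inter_subset_right : A ∩ Set.Iio n ⊆ _)

theorem le_natCard_inter_Iio_mul {A : Set ℕ} {M : ℕ} (hA : ∀ N, ∃ j < M, N + j ∈ A) (m : ℕ) :
    m ≤ Nat.card ↥(A ∩ Set.Iio (m * M)) := by
  suffices StrictMono fun m => (A ∩ Set.Iio (m * M)).ncard from this.le_apply
  refine strictMono_nat_of_lt_succ fun m =>
    Set.ncard_lt_ncard ?_ ((Set.finite_Iio _).inter_of_right A)
  obtain ⟨j, hj, hmem⟩ := hA (m * M)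
  have hlt : m * M + j < (m + 1) * M := by rw [Nat.succ_mul]; omega
  refine (Set.ssubset_iff_of_subset ?_).mpr ⟨m * M + j, ⟨hmem, hlt⟩, fun h => ?_⟩
  · exact Set.inter_subset_inter_right A (Set.Iio_subset_Iio (by omega))
  · exact (Nat.le_add_right _ j).not_gt h.2

theorem inv_le_upperDensity {A : Set ℕ} {M : ℕ} (hA : ∀ N, ∃ j < M, N + j ∈ A) :
    (M : ℝ)⁻¹ ≤ upperDensity A := by
  have hM : 0 < M := (hA 0).elim fun j hj => j.zero_le.trans_lt hj.1
  have hbdd : IsBoundedUnder (· ≤ ·) atTop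
      (fun n : ℕ => (Nat.card ↥(A ∩ Set.Iio n) : ℝ) / n) :=
    isBoundedUnder_of ⟨1, fun n => div_le_one_of_le₀
      (by exact_mod_cast natCard_inter_Iio_le A n) n.cast_nonneg⟩
  refine le_limsup_of_frequently_le (frequently_atTop.mpr fun n => ?_) hbdd
  refine ⟨(n + 1) * M, by nlinarith, ?_⟩
  have hcard : ((n + 1 : ℕ) : ℝ) ≤ Nat.card ↥(A ∩ Set.Iio ((n + 1) * M)) :=
    Nat.cast_le.mpr (le_natCard_inter_Iio_mul hA (n + 1))
  calc (M : ℝ)⁻¹ = ((n + 1 : ℕ) : ℝ) / ((n + 1) * M : ℕ) := by push_cast; field_simp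
    _ ≤ _ := by gcongr

theorem isThick_compl_of_upperDensity_eq_zero {A : Set ℕ} (hA : upperDensity A = 0) :
    IsThick Aᶜ := by
  intro M
  by_contra! hmeet
  have hM : 0 < M := (hmeet 0).elim fun j hj => j.zero_le.trans_lt hj.1
  have hle : (M : ℝ)⁻¹ ≤ 0 := hA ▸ inv_le_upperDensity (by simpa using hmeet)
  exact hle.not_gt (by positivity)

namespace UniformlyRecurrent

variable {Ω : Type*} {a b : ℕ → Ω}

theorem exists_occursAt_of_isThick (ha : UniformlyRecurrent a) {A : Set ℕ} (hA : IsThick A)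
    {w : List Ω} (hw : IsFactor a w) :
    ∃ i, OccursAt a w i ∧ ∀ j < w.length, i + j ∈ A := by
  obtain ⟨C, hC⟩ := ha w hw
  obtain ⟨N, hN⟩ := hA (C + w.length)
  obtain ⟨i, hNi, hiC, hi⟩ := hC N
  obtain ⟨d, rfl⟩ := Nat.exists_eq_add_of_le hNi
  refine ⟨N + d, hi, fun j hj => ?_⟩
  rw [Nat.add_assoc]
  exact hN (d + j) (by omega)

theorem isFactor_of_isThick (ha : UniformlyRecurrent a) (hab : IsThick {n | a n = b n})
    {w : List Ω} (hw : IsFactor a w) : IsFactor b w := by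
  obtain ⟨i, hi, hagree⟩ := ha.exists_occursAt_of_isThick hab hw
  exact ⟨i, fun j hj => (hi j hj).trans (hagree j hj)⟩

theorem periodic_of_isThick (ha : UniformlyRecurrent a) {q : ℕ}
    (hq : IsThick {n | a (n + q) = a n}) : Function.Periodic a q := by
  intro n
  have hw : IsFactor a (List.ofFn fun j : Fin (q + 1) => a (n + j)) :=
    ⟨n, fun j _ => by rw [List.get_ofFn, Fin.val_cast]⟩
  obtain ⟨i, hi, hmem⟩ := ha.exists_occursAt_of_isThick hq hw
  have hstart : a n = a i := by simpa using hi 0 (by simp)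
  have hend : a (n + q) = a (i + q) := by
    simpa [-List.ofFn_succ] using hi q (by simp)
  have hshift : a (i + q) = a i := hmem 0 (by simp)
  rw [hend, hshift, hstart]

theorem exists_periodic (ha : UniformlyRecurrent a) (hult : IsUltimatelyPeriodic a) :
    ∃ q : ℕ, 1 ≤ q ∧ Function.Periodic a q := by
  obtain ⟨q, hq, N, hN⟩ := hult
  exact ⟨q, hq, ha.periodic_of_isThick
    (isThick_of_eventually_mem (eventually_atTop.mpr ⟨N, hN⟩))⟩

end UniformlyRecurrent

theorem uniformly_recurrent_ae_coincide_eq_periodic_general.{u} {Ω : Type u} {k l : ℕ}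
    (hk : 2 ≤ k) (hl : 2 ≤ l) (hind : MultIndep k l) {a b : ℕ → Ω} (ha : IsAutomatic k a)
    (hb : IsAutomatic l b) (hab : IsThick {n | a n = b n}) (hua : UniformlyRecurrent a)
    (hub : UniformlyRecurrent b) (fagnot : FagnotStatement.{u}) :
    a = b ∧ ∃ q : ℕ, 1 ≤ q ∧ Function.Periodic a q := by
  have hba : IsThick {n | b n = a n} := by simpa only [eq_comm] using hab
  have hlang (w : List Ω) : IsFactor a w ↔ IsFactor b w :=
    ⟨hua.isFactor_of_isThick hab, hub.isFactor_of_isThick hba⟩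
  obtain ⟨hulta, hultb⟩ := fagnot Ω k l hk hl hind a b ha hb hlang
  obtain ⟨p, hp, hap⟩ := hua.exists_periodic hulta
  obtain ⟨q, hq, hbq⟩ := hub.exists_periodic hultb
  exact ⟨eq_of_periodic_of_isThick hap hbq hp hq hab, p, hp, hap⟩

/-- If `k, l ≥ 2` are multiplicatively independent, `a` is `k`-automatic, `b` is
`l`-automatic, `a` and `b` coincide almost everywhere and are both uniformly
recurrent, then `a = b` and this common sequence is periodic. One may assume as
input Fagnot's theorem: automatic sequences with respect to multiplicatively
independent bases having the same language are ultimately periodic. -/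
theorem uniformly_recurrent_ae_coincide_eq_periodic {Ω : Type} [Fintype Ω]
    (k l : ℕ) (hk : 2 ≤ k) (hl : 2 ≤ l) (hind : MultIndep k l)
    (a b : ℕ → Ω) (ha : IsAutomatic k a) (hb : IsAutomatic l b)
    (hae : upperDensity {n : ℕ | a n ≠ b n} = 0)
    (hua : UniformlyRecurrent a) (hub : UniformlyRecurrent b)
    (fagnot : ∀ (Ω' : Type) (k' l' : ℕ), 2 ≤ k' → 2 ≤ l' → MultIndep k' l' →
      ∀ a' b' : ℕ → Ω', IsAutomatic k' a' → IsAutomatic l' b' →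
      (∀ w : List Ω', IsFactor a' w ↔ IsFactor b' w) →
      (∃ q : ℕ, 1 ≤ q ∧ ∃ N : ℕ, ∀ n : ℕ, N ≤ n → a' (n + q) = a' n) ∧
      (∃ q : ℕ, 1 ≤ q ∧ ∃ N : ℕ, ∀ n : ℕ, N ≤ n → b' (n + q) = b' n)) :
    a = b ∧ ∃ q : ℕ, 1 ≤ q ∧ ∀ n : ℕ, a (n + q) = a n := by
  have hab : IsThick {n : ℕ | a n = b n} := by
    simpa [Set.compl_ofPred] using isThick_compl_of_upperDensity_eq_zero hae
  exact uniformly_recurrent_ae_coincide_eq_periodic_general hk hl hind ha hb hab hua hub fagnot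
end
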